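/- arXiv:2407.09558 — 3 statements merged into one kernel-verified Lean document; each statement's English description precedes it below -/
import Mathlib

section
/- The only pairs of positive integers (x, y) satisfying y² = 8x⁴ - 4 are (x, y) = (1, 2) and (x, y) = (13, 478); that is, {(x, y) ∈ ℤ² : x ≥ 1, y ≥ 1, y² = 8x⁴ - 4} = {(1, 2), (13, 478)}. -/
open Finset in
lemma fact_dvd_prod (k m : ℕ) : m.factorial ∣ 2 ^ m * ∏ i ∈ range m, (4 * (k + i) + 5) := by
  obtain ⟨e, o, ho, h⟩ := Nat.exists_eq_two_pow_mul_odd (Nat.factorial_ne_zero m)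
  have he : e ≤ m := by
    rcases Nat.eq_zero_or_pos m with rfl | hm
    · simp at h
      have : 2 ^ e = 1 := Nat.eq_one_of_mul_eq_one_right h.symm
      simpa using this
    · have h1 := Nat.emultiplicity_two_factorial_lt hm.ne'
      have h2 : (e : ℕ∞) ≤ emultiplicity 2 m.factorial :=
        le_emultiplicity_of_pow_dvd ⟨o, h⟩
      exact_mod_cast (h2.trans h1.le)
  rw [h]
  refine mul_dvd_mul (pow_dvd_pow 2 he) ?_
  have hc : Nat.Coprime 4 o := by
    have : Nat.Coprime 2 o := (Nat.coprime_two_left).2 ho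
    exact Nat.Coprime.pow_left 2 this
  obtain ⟨r, hr⟩ : ∃ r : ℕ, ((4 * r : ℕ) : ZMod o) = 1 := by
    have : NeZero o := ⟨by rintro rfl; simp at ho⟩
    refine ⟨((4 : ZMod o)⁻¹).val, ?_⟩
    push_cast
    rw [ZMod.natCast_zmod_val]
    have := ZMod.coe_mul_inv_eq_one 4 hc
    exact_mod_cast this
  rw [← CharP.cast_eq_zero_iff (ZMod o) o]
  have h3 : (∏ i ∈ range m, ((4 * (k + i) + 5 : ℕ) : ZMod o)) =
      ∏ i ∈ range m, ((4 : ZMod o) * ((k + 1 + r + i : ℕ) : ZMod o)) := by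
    refine prod_congr rfl fun i _ => ?_
    push_cast at hr ⊢
    linear_combination (-1 : ZMod o) * hr
  rw [Nat.cast_prod, h3, prod_mul_distrib, ← Nat.cast_prod, ← Nat.ascFactorial_eq_prod_range]
  have h4 : o ∣ (k + 1 + r).ascFactorial m :=
    (Dvd.intro_left _ h.symm).trans (Nat.factorial_dvd_ascFactorial _ _)
  rw [(CharP.cast_eq_zero_iff (ZMod o) o _).2 h4, mul_zero]

noncomputable def gg (k m : ℕ) : ℂ := ∏ i ∈ Finset.range m, ((8 * (k + i) + 10 : ℂ) / (i + 1))

lemma gg_zero (k : ℕ) : gg k 0 = 1 := by simp [gg]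
lemma gg_succ (k m : ℕ) : gg k (m + 1) = gg k m * ((8 * (k + m) + 10) / (m + 1)) := by
  rw [gg, Finset.prod_range_succ]; rfl

lemma gg_shift (k m : ℕ) : gg k (m + 1) = gg (k + 1) m * ((8 * k + 10) / (m + 1)) := by
  induction m with
  | zero => rw [gg_succ]; simp [gg_zero]
  | succ m ih =>
    rw [gg_succ, ih, gg_succ]
    have h1 : (m + 1 : ℂ) ≠ 0 := by exact_mod_cast Nat.succ_ne_zero m
    have h2 : (m + 1 + 1 : ℂ) ≠ 0 := by exact_mod_cast Nat.succ_ne_zero (m+1)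
    push_cast
    field_simp
    ring

lemma gg_int (k m : ℕ) : ∃ z : ℤ, gg k m = z := by
  obtain ⟨c, hc⟩ := fact_dvd_prod k m
  refine ⟨c, ?_⟩
  have h1 : gg k m * m.factorial = ((2 ^ m * ∏ i ∈ Finset.range m, (4 * (k + i) + 5) : ℕ) : ℂ) := by
    clear hc
    induction m with
    | zero => simp [gg_zero]
    | succ m ih =>
      have h1 : (m + 1 : ℂ) ≠ 0 := by exact_mod_cast Nat.succ_ne_zero m
      rw [gg_succ, Finset.prod_range_succ, Nat.factorial_succ]
      push_cast at ih ⊢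
      field_simp
      linear_combination (8 * (k + m) + 10 : ℂ) * ih
  rw [hc] at h1
  have h2 : (m.factorial : ℂ) ≠ 0 := by exact_mod_cast Nat.factorial_ne_zero m
  apply mul_right_cancel₀ h2
  rw [h1]; push_cast; ring

noncomputable def ee (n k : ℕ) : ℂ := if k ≤ n then ((n + k).choose k : ℂ) * gg k (n - k) else 0

lemma ee_int (n k : ℕ) : ∃ z : ℤ, ee n k = z := by
  unfold ee
  split_ifs
  · obtain ⟨z, hz⟩ := gg_int k (n - k)
    exact ⟨(n + k).choose k * z, by rw [hz]; push_cast; ring⟩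
  · exact ⟨0, by simp⟩

lemma ee_add (k m : ℕ) : ee (k + m) k = ((k + m + k).factorial : ℂ) / ((k + m).factorial * k.factorial) * gg k m := by
  unfold ee
  rw [if_pos (by omega), Nat.add_sub_cancel_left, Nat.add_choose]
  congr 1
  rw [Nat.cast_div (Nat.factorial_mul_factorial_dvd_factorial_add _ _)]
  · push_cast; rfl
  · exact_mod_cast (mul_ne_zero (Nat.factorial_ne_zero _) (Nat.factorial_ne_zero _))

lemma ee_gt {n k : ℕ} (h : n < k) : ee n k = 0 := by
  unfold ee; rw [if_neg (by omega)]

lemma ee_rec_zero (n : ℕ) : ((n : ℂ) + 2) * (n + 1) * ee (n + 2) 0 =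
    (n + 1) * (2 * n + 3) * (8 * ee (n + 1) 0) - 4 * (4 * n + 3) * (4 * n + 5) * ee n 0 := by
  have h (m : ℕ) : ee m 0 = gg 0 m := by simp [ee]
  rw [h, h, h, gg_succ, gg_succ]
  have h1 : (n + 1 : ℂ) ≠ 0 := by exact_mod_cast Nat.succ_ne_zero n
  have h2 : (n + 1 + 1 : ℂ) ≠ 0 := by exact_mod_cast Nat.succ_ne_zero (n+1)
  push_cast
  field_simp
  ring

lemma ee_rec_succ (n k : ℕ) : ((n : ℂ) + 2) * (n + 1) * ee (n + 2) (k + 1) =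
    (n + 1) * (2 * n + 3) * (8 * ee (n + 1) (k + 1) + 2 * ee (n + 1) k)
      - 4 * (4 * n + 3) * (4 * n + 5) * ee n (k + 1) := by
  have hf (n : ℕ) : (n.factorial : ℂ) ≠ 0 := by exact_mod_cast Nat.factorial_ne_zero n
  have hs (n : ℕ) : (n + 1 : ℂ) ≠ 0 := by exact_mod_cast Nat.succ_ne_zero n
  rcases lt_trichotomy n k with h | h | h
  · rcases Nat.lt_or_ge (n + 1) k with h' | h'
    · simp [ee_gt (show n + 2 < k + 1 by omega), ee_gt (show n + 1 < k + 1 by omega),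
        ee_gt (show n < k + 1 by omega), ee_gt h']
    · obtain rfl : k = n + 1 := by omega
      rw [ee_gt (show n + 1 < n + 1 + 1 by omega), ee_gt (show n < n + 1 + 1 by omega)]
      have e1 := ee_add (n + 2) 0
      have e2 := ee_add (n + 1) 0
      simp only [add_zero] at e1 e2
      rw [show n + 1 + 1 = n + 2 from rfl, e1, e2, gg_zero, gg_zero,
        show n + 2 + (n + 2) = (n + 1 + (n + 1) + 1) + 1 by ring, Nat.factorial_succ (n + 1 + (n + 1) + 1),
        Nat.factorial_succ (n + 1 + (n + 1)), Nat.factorial_succ (n + 1)]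
      have h1 := hf (n + 1)
      have h2 := hs n
      have h3 := hs (n + 1)
      push_cast at h3 ⊢
      field_simp
      ring
  · subst h
    rw [ee_gt (show n < n + 1 by omega)]
    have e1 := ee_add (n + 1) 1
    have e2 := ee_add (n + 1) 0
    have e3 := ee_add n 1
    simp only [add_zero] at e2
    rw [show n + 2 = n + 1 + 1 from rfl, e1, e2, e3, gg_succ (n + 1) 0, gg_succ n 0, gg_zero, gg_zero,
      show n + 1 + 1 + (n + 1) = (n + 1 + n + 1) + 1 by ring,
      show n + 1 + (n + 1) = n + 1 + n + 1 by ring,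
      Nat.factorial_succ (n + 1 + n + 1), Nat.factorial_succ (n + 1 + n),
      Nat.factorial_succ (n + 1), Nat.factorial_succ n]
    have h1 := hf n
    have h2 := hs n
    have h3 := hs (n + 1)
    push_cast at h3 ⊢
    field_simp
    ring
  · obtain ⟨m, rfl⟩ : ∃ m, n = k + 1 + m := ⟨n - (k + 1), by omega⟩
    have e1 := ee_add (k + 1) (m + 2)
    have e2 := ee_add (k + 1) (m + 1)
    have e3 := ee_add k (m + 2)
    have e4 := ee_add (k + 1) m
    rw [show k + 1 + (m + 2) = k + m + 1 + 1 + 1 by ring] at e1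
    rw [show k + 1 + (m + 1) = k + m + 1 + 1 by ring] at e2
    rw [show k + (m + 2) = k + m + 1 + 1 by ring] at e3
    rw [show k + 1 + m = k + m + 1 by ring] at e4 ⊢
    rw [show k + m + 1 + 2 = k + m + 1 + 1 + 1 by ring, e1, e2, e3, e4]
    rw [gg_succ k (m + 1), gg_shift k m, gg_succ (k + 1) (m + 1), gg_succ (k + 1) m,
      show k + m + 1 + 1 + 1 + (k + 1) = k + m + 1 + k + 1 + 1 + 1 by ring,
      show k + m + 1 + 1 + (k + 1) = k + m + 1 + k + 1 + 1 by ring,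
      show k + m + 1 + 1 + k = k + m + 1 + k + 1 by ring,
      show k + m + 1 + (k + 1) = k + m + 1 + k + 1 by ring,
      Nat.factorial_succ (k + m + 1 + k + 1 + 1), Nat.factorial_succ (k + m + 1 + k + 1),
      Nat.factorial_succ (k + m + 1 + 1), Nat.factorial_succ (k + m + 1),
      Nat.factorial_succ k]
    have h1 := hf (k + m + 1)
    have h2 := hs k
    have h3 := hs (k + m + 1)
    have h4 := hs (k + m + 1 + 1)
    have h5 := hf k
    have h6 := hs m
    have h7 := hs (m + 1)
    have h8 := hf (k + m + 1 + k + 1)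
    push_cast at h3 h4 h7 ⊢
    generalize gg (k + 1) m = G
    field_simp
    ring

noncomputable def ww : ℂ := 4 * (239 * Complex.I - 1)

noncomputable def VV (n : ℕ) : ℂ := ∑ k ∈ Finset.range (n + 1), ee n k * ww ^ k

lemma VV_ext (n m : ℕ) (h : n + 1 ≤ m) : ∑ k ∈ Finset.range m, ee n k * ww ^ k = VV n := by
  unfold VV
  symm
  apply Finset.sum_subset (by simpa using h)
  intro k _ hk
  rw [ee_gt (by simpa using hk), zero_mul]

lemma VV_rec (n : ℕ) : ((n : ℂ) + 2) * (n + 1) * VV (n + 2) =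
    (n + 1) * (2 * n + 3) * (1912 * Complex.I * VV (n + 1))
      - 4 * (4 * n + 3) * (4 * n + 5) * VV n := by
  have h1 := VV_ext (n + 1) (n + 3) (by omega)
  have h2 := VV_ext n (n + 3) (by omega)
  have h3 := VV_ext (n + 2) (n + 3) (by omega)
  have h4 := VV_ext (n + 1) (n + 2) (by omega)
  have h5 : 1912 * Complex.I * VV (n + 1) = 8 * VV (n + 1) + 2 * ww * VV (n + 1) := by
    unfold ww; ring
  rw [h5]
  nth_rw 2 [← h4]
  rw [← h1, ← h2, ← h3]
  rw [Finset.sum_range_succ', Finset.sum_range_succ' _ (n + 2), Finset.sum_range_succ' _ (n + 2)]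
  have e0 := ee_rec_zero n
  have e : ∑ k ∈ Finset.range (n + 2), (((n : ℂ) + 2) * (n + 1) * ee (n + 2) (k + 1)) * ww ^ (k + 1) =
    ∑ k ∈ Finset.range (n + 2), ((n + 1) * (2 * n + 3) * (8 * ee (n + 1) (k + 1) + 2 * ee (n + 1) k)
      - 4 * (4 * n + 3) * (4 * n + 5) * ee n (k + 1)) * ww ^ (k + 1) :=
    Finset.sum_congr rfl fun k _ => by rw [ee_rec_succ]
  have e1 : ∑ k ∈ Finset.range (n + 2), (((n : ℂ) + 2) * (n + 1) * ee (n + 2) (k + 1)) * ww ^ (k + 1)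
     = ((n : ℂ) + 2) * (n + 1) * ∑ k ∈ Finset.range (n + 2), ee (n + 2) (k + 1) * ww ^ (k + 1) := by
    rw [Finset.mul_sum]; exact Finset.sum_congr rfl fun k _ => by ring
  have e2 : ∑ k ∈ Finset.range (n + 2), ((n + 1) * (2 * n + 3) * (8 * ee (n + 1) (k + 1) + 2 * ee (n + 1) k)
      - 4 * (4 * n + 3) * (4 * n + 5) * ee n (k + 1)) * ww ^ (k + 1) =
      (n + 1) * (2 * n + 3) * (8 * ∑ k ∈ Finset.range (n + 2), ee (n + 1) (k + 1) * ww ^ (k + 1)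
        + 2 * ww * ∑ k ∈ Finset.range (n + 2), ee (n + 1) k * ww ^ k)
      - 4 * (4 * n + 3) * (4 * n + 5) * ∑ k ∈ Finset.range (n + 2), ee n (k + 1) * ww ^ (k + 1) := by
    simp only [Finset.mul_sum, ← Finset.sum_add_distrib, ← Finset.sum_sub_distrib]
    exact Finset.sum_congr rfl fun k _ => by ring
  rw [e1, e2] at e
  simp only [pow_zero, mul_one]
  linear_combination e + e0

def GI (z : ℂ) : Prop := ∃ a b : ℤ, z = a + b * Complex.I

lemma GI.add {z w : ℂ} (hz : GI z) (hw : GI w) : GI (z + w) := by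
  obtain ⟨a, b, rfl⟩ := hz
  obtain ⟨c, d, rfl⟩ := hw
  exact ⟨a + c, b + d, by push_cast; ring⟩

lemma GI.mul {z w : ℂ} (hz : GI z) (hw : GI w) : GI (z * w) := by
  obtain ⟨a, b, rfl⟩ := hz
  obtain ⟨c, d, rfl⟩ := hw
  refine ⟨a * c - b * d, a * d + b * c, ?_⟩
  push_cast
  linear_combination (b * d : ℂ) * Complex.I_mul_I

lemma GI.pow {z : ℂ} (hz : GI z) (n : ℕ) : GI (z ^ n) := by
  induction n with
  | zero => exact ⟨1, 0, by simp⟩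
  | succ n ih => rw [pow_succ]; exact ih.mul hz

lemma VV_GI (n : ℕ) : GI (VV n) := by
  unfold VV
  refine Finset.sum_induction _ GI (fun _ _ => GI.add) ⟨0, 0, by simp⟩ fun k _ => ?_
  refine GI.mul ?_ (GI.pow ⟨-4, 956, by unfold ww; push_cast; ring⟩ k)
  obtain ⟨z, hz⟩ := ee_int n k
  exact ⟨z, 0, by rw [hz]; simp⟩

/-- The recurrence satisfied by the Padé data. -/
def Rec (u : ℕ → ℝ) : Prop := ∀ n : ℕ, ((n : ℝ) + 2) * (n + 1) * u (n + 2) =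
    (n + 1) * (2 * n + 3) * (1912 * u (n + 1)) + 4 * (4 * n + 3) * (4 * n + 5) * u n

lemma exists_rs : ∃ r s : ℕ → ℤ, r 0 = 1 ∧ r 1 = 1912 ∧ s 0 = 0 ∧ s 1 = 2 ∧
    Rec (fun n => r n) ∧ Rec (fun n => s n) := by
  have h (n : ℕ) : GI ((-Complex.I) ^ n * VV n) :=
    GI.mul (GI.pow ⟨0, -1, by simp⟩ n) (VV_GI n)
  choose r s' hrs using h
  have ext {a b c d : ℝ} (h : (a : ℂ) + b * Complex.I = c + d * Complex.I) : a = c ∧ b = d := by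
    have h1 := congrArg Complex.re h
    have h2 := congrArg Complex.im h
    simp at h1 h2
    exact ⟨h1, h2⟩
  have h0 : VV 0 = 1 := by simp [VV, ee, gg_zero]
  have h1 : VV 1 = 2 + 1912 * Complex.I := by
    simp [VV, ee, Finset.sum_range_succ, gg_zero, gg_succ, ww]; ring
  have a0 := hrs 0
  have a1 := hrs 1
  rw [h0] at a0
  rw [h1] at a1
  have b0 := @ext 1 0 (r 0) (s' 0) (by push_cast; rw [← a0]; simp)
  have b1 := @ext 1912 (-2) (r 1) (s' 1) (by
    push_cast; rw [← a1]; linear_combination (1912 : ℂ) * Complex.I_mul_I)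
  have key (n : ℕ) := @ext
    (((n : ℝ) + 2) * (n + 1) * r (n + 2)) (((n : ℝ) + 2) * (n + 1) * s' (n + 2))
    ((n + 1) * (2 * n + 3) * (1912 * r (n + 1)) + 4 * (4 * n + 3) * (4 * n + 5) * r n)
    ((n + 1) * (2 * n + 3) * (1912 * s' (n + 1)) + 4 * (4 * n + 3) * (4 * n + 5) * s' n) (by
      have e := VV_rec n
      have c0 := hrs n
      have c1 := hrs (n + 1)
      have c2 := hrs (n + 2)
      push_cast
      have hI : (-Complex.I) ^ (n + 2) = - (-Complex.I) ^ n := by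
        rw [pow_add]; simp
      have hI' : (-Complex.I) ^ (n + 1) * Complex.I = (-Complex.I) ^ n := by
        rw [pow_succ]; linear_combination (-(-Complex.I) ^ n) * Complex.I_mul_I
      rw [hI] at c2
      linear_combination (-((n : ℂ) + 2) * (n + 1)) * c2 - (-Complex.I) ^ n * e
        + ((n + 1) * (2 * n + 3) * 1912 : ℂ) * c1 + (4 * (4 * n + 3) * (4 * n + 5) : ℂ) * c0)
  refine ⟨r, fun n => - s' n, ?_, ?_, ?_, ?_, fun n => (key n).1, fun n => ?_⟩
  · exact_mod_cast b0.1.symm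
  · exact_mod_cast b1.1.symm
  · have := b0.2; have h : s' 0 = 0 := by exact_mod_cast this.symm
    simp [h]
  · have h : s' 1 = -2 := by exact_mod_cast b1.2.symm
    simp [h]
  · have := (key n).2
    push_cast
    linear_combination -this

noncomputable def JJ (f : ℝ) (n : ℕ) : ℝ :=
  ∫ s in (0 : ℝ)..f, (Real.cos s - Real.cos f) ^ n * Real.cos (s / 4)

lemma JJ_zero (f : ℝ) : JJ f 0 = 4 * Real.sin (f / 4) := by
  unfold JJ
  have : ∀ s ∈ Set.uIcc 0 f, HasDerivAt (fun s => 4 * Real.sin (s / 4))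
      ((Real.cos s - Real.cos f) ^ 0 * Real.cos (s / 4)) s := by
    intro s _
    have h := (((hasDerivAt_id s).div_const 4).sin).const_mul 4
    refine HasDerivAt.congr_deriv h ?_
    simp only [id]
    ring
  rw [intervalIntegral.integral_eq_sub_of_hasDerivAt this]
  · simp
  · apply Continuous.intervalIntegrable; fun_prop

lemma JJ_hasDeriv (f : ℝ) (n : ℕ) (s : ℝ) :
    HasDerivAt (fun s => -(1 / 4) * (Real.cos s - Real.cos f) ^ (n + 1) * Real.sin (s / 4)
      + (n + 1) * (Real.cos s - Real.cos f) ^ n * Real.sin s * Real.cos (s / 4))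
      (-(1 / 4) * ((n + 1) * (Real.cos s - Real.cos f) ^ n * (-Real.sin s)) * Real.sin (s / 4)
        + -(1 / 4) * (Real.cos s - Real.cos f) ^ (n + 1) * (Real.cos (s / 4) * (1 / 4))
       + (((n + 1) * (n * (Real.cos s - Real.cos f) ^ (n - 1) * (-Real.sin s))) * Real.sin s
         + (n + 1) * (Real.cos s - Real.cos f) ^ n * Real.cos s) * Real.cos (s / 4)
       + (n + 1) * (Real.cos s - Real.cos f) ^ n * Real.sin s * (-Real.sin (s / 4) * (1 / 4))) s := by
  have hu : HasDerivAt (fun s => Real.cos s - Real.cos f) (-Real.sin s) s :=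
    (Real.hasDerivAt_cos s).sub_const _
  have h4 : HasDerivAt (fun s : ℝ => s / 4) (1 / 4) s := (hasDerivAt_id s).div_const 4
  have h := (((hu.pow (n + 1)).const_mul (-(1 / 4))).mul h4.sin).add
    ((((hu.pow n).const_mul ((n : ℝ) + 1)).mul (Real.hasDerivAt_sin s)).mul h4.cos)
  refine HasDerivAt.congr_deriv h ?_
  simp only [Pi.pow_apply, Pi.mul_apply, Nat.add_sub_cancel]
  push_cast
  ring

lemma JJ_int (f : ℝ) (n : ℕ) : IntervalIntegrable
    (fun s => (Real.cos s - Real.cos f) ^ n * Real.cos (s / 4)) MeasureTheory.volume 0 f := by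
  apply Continuous.intervalIntegrable; fun_prop

lemma JJ_one (f : ℝ) : 15 / 16 * JJ f 1 = Real.sin f * Real.cos (f / 4) - Real.cos f * JJ f 0 := by
  have h : ∀ s ∈ Set.uIcc 0 f, HasDerivAt (fun s => -(1 / 4) * (Real.cos s - Real.cos f) ^ (0 + 1) * Real.sin (s / 4)
      + ((0 : ℕ) + 1) * (Real.cos s - Real.cos f) ^ 0 * Real.sin s * Real.cos (s / 4))
      (15 / 16 * ((Real.cos s - Real.cos f) ^ 1 * Real.cos (s / 4)) +
        Real.cos f * ((Real.cos s - Real.cos f) ^ 0 * Real.cos (s / 4))) s := by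
    intro s _
    convert JJ_hasDeriv f 0 s using 1
    simp; ring
  have h2 := intervalIntegral.integral_eq_sub_of_hasDerivAt h
    (((JJ_int f 1).const_mul _).add ((JJ_int f 0).const_mul _))
  rw [intervalIntegral.integral_add ((JJ_int f 1).const_mul _) ((JJ_int f 0).const_mul _),
    intervalIntegral.integral_const_mul, intervalIntegral.integral_const_mul] at h2
  change 15 / 16 * JJ f 1 + Real.cos f * JJ f 0 = _ at h2
  simp at h2
  linarith

lemma JJ_rec (f : ℝ) (n : ℕ) : ((n + 2 : ℝ) ^ 2 - 1 / 16) * JJ f (n + 2) =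
    (n + 2) * (n + 1) * Real.sin f ^ 2 * JJ f n - (n + 2) * (2 * n + 3) * Real.cos f * JJ f (n + 1) := by
  have h : ∀ s ∈ Set.uIcc 0 f, HasDerivAt (fun s => -(1 / 4) * (Real.cos s - Real.cos f) ^ (n + 1 + 1) * Real.sin (s / 4)
      + ((n + 1 : ℕ) + 1) * (Real.cos s - Real.cos f) ^ (n + 1) * Real.sin s * Real.cos (s / 4))
      (((n + 2 : ℝ) ^ 2 - 1 / 16) * ((Real.cos s - Real.cos f) ^ (n + 2) * Real.cos (s / 4)) +
        (n + 2) * (2 * n + 3) * Real.cos f * ((Real.cos s - Real.cos f) ^ (n + 1) * Real.cos (s / 4)) +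
        (-(n + 2) * (n + 1) * Real.sin f ^ 2) * ((Real.cos s - Real.cos f) ^ n * Real.cos (s / 4))) s := by
    intro s _
    convert JJ_hasDeriv f (n + 1) s using 1
    simp only [Nat.add_sub_cancel]
    push_cast
    have h1 : Real.sin s ^ 2 = 1 - Real.cos s ^ 2 := Real.sin_sq s
    have h2 : Real.sin f ^ 2 = 1 - Real.cos f ^ 2 := Real.sin_sq f
    rw [h2]
    linear_combination (((n : ℝ) + 2) * (n + 1) * (Real.cos s - Real.cos f) ^ n * Real.cos (s / 4)) * h1
  have i2 := (JJ_int f (n + 2)).const_mul ((n + 2 : ℝ) ^ 2 - 1 / 16)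
  have i1 := (JJ_int f (n + 1)).const_mul ((n + 2 : ℝ) * (2 * n + 3) * Real.cos f)
  have i0 := (JJ_int f n).const_mul (-(n + 2 : ℝ) * (n + 1) * Real.sin f ^ 2)
  have h2 := intervalIntegral.integral_eq_sub_of_hasDerivAt h ((i2.add i1).add i0)
  rw [intervalIntegral.integral_add (i2.add i1) i0, intervalIntegral.integral_add i2 i1,
    intervalIntegral.integral_const_mul, intervalIntegral.integral_const_mul,
    intervalIntegral.integral_const_mul] at h2
  change _ * JJ f (n + 2) + _ * JJ f (n + 1) + _ * JJ f n = _ at h2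
  simp at h2
  linarith

lemma JJ_bound {f : ℝ} (h0 : 0 < f) (h1 : f ≤ 1) (n : ℕ) :
    |JJ f n| ≤ (1 - Real.cos f) ^ n * f := by
  unfold JJ
  have h := intervalIntegral.norm_integral_le_of_norm_le_const (a := 0) (b := f)
    (f := fun s => (Real.cos s - Real.cos f) ^ n * Real.cos (s / 4)) (C := (1 - Real.cos f) ^ n) (by
      intro s hs
      rw [Set.uIoc_of_le h0.le] at hs
      have hpi := Real.pi_gt_three
      have hc : Real.cos f ≤ Real.cos s :=
        Real.cos_le_cos_of_nonneg_of_le_pi hs.1.le (by linarith) hs.2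
      rw [norm_mul, norm_pow, Real.norm_eq_abs, Real.norm_eq_abs, abs_of_nonneg (by linarith)]
      have h3 := Real.abs_cos_le_one (s / 4)
      have h4 : (Real.cos s - Real.cos f) ^ n ≤ (1 - Real.cos f) ^ n :=
        pow_le_pow_left₀ (by linarith) (by linarith [Real.cos_le_one s]) n
      have h5 : 0 ≤ (Real.cos s - Real.cos f) ^ n := pow_nonneg (by linarith) n
      nlinarith [abs_nonneg (Real.cos (s / 4))])
  rw [Real.norm_eq_abs] at h
  rwa [sub_zero, abs_of_pos h0] at h

noncomputable def cc (n : ℕ) : ℝ := ∏ k ∈ Finset.range n, (1 - 1 / (16 * (k + 1 : ℝ) ^ 2))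

lemma cc_bound (n : ℕ) : 0 ≤ cc n ∧ cc n ≤ 1 := by
  have h (k : ℕ) : 0 ≤ 1 - 1 / (16 * (k + 1 : ℝ) ^ 2) ∧ 1 - 1 / (16 * (k + 1 : ℝ) ^ 2) ≤ 1 := by
    constructor
    · rw [sub_nonneg, div_le_one (by positivity)]
      have : (0 : ℝ) ≤ k := Nat.cast_nonneg k
      nlinarith
    · have : 0 ≤ 1 / (16 * (k + 1 : ℝ) ^ 2) := by positivity
      linarith
  exact ⟨Finset.prod_nonneg fun k _ => (h k).1, Finset.prod_le_one (fun k _ => (h k).1) fun k _ => (h k).2⟩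

lemma cc_succ (n : ℕ) : cc (n + 1) * (n + 1) ^ 2 = cc n * ((n + 1) ^ 2 - 1 / 16) := by
  have : ((n : ℝ) + 1) ≠ 0 := by positivity
  rw [cc, Finset.prod_range_succ]
  change cc n * _ * _ = _
  field_simp

/-- the small linear form -/
lemma Lam_eq {f : ℝ} (hC : Real.cos f = 239 * Real.sin f) {u : ℕ → ℝ} (hu : Rec u)
    (h0 : u 0 = Real.sin (f / 4)) (h1 : u 1 = 1912 * Real.sin (f / 4) - 2 * Real.cos (f / 4)) (n : ℕ) :
    4 * (-Real.sin f) ^ n * u n = 8 ^ n * cc n * JJ f n := by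
  induction n using Nat.twoStepInduction with
  | zero => rw [JJ_zero, h0]; simp [cc]
  | one =>
    have := JJ_one f
    rw [JJ_zero, hC] at this
    rw [h1]
    simp only [cc, Finset.prod_range_one]
    norm_num
    linear_combination -8 * this
  | more n ih0 ih1 =>
    have hr := hu n
    have hJ := JJ_rec f n
    have c1 := cc_succ n
    have c2 := cc_succ (n + 1)
    push_cast at c2
    have hn : ((n : ℝ) + 2) ^ 2 * (n + 1) ≠ 0 := by positivity
    have hn1 : ((n : ℝ) + 1) ≠ 0 := by positivity
    have hn2 : ((n : ℝ) + 2) ≠ 0 := by positivity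
    apply mul_left_cancel₀ hn
    have hcc2 : cc (n + 1 + 1) = cc (n + 1) * ((n + 2) ^ 2 - 1 / 16) / (n + 2) ^ 2 := by
      field_simp; linear_combination 16 * c2
    have hcc1 : cc n * ((n + 1) ^ 2 - 1 / 16) = cc (n + 1) * (n + 1) ^ 2 := c1.symm
    rw [show n + 2 = n + 1 + 1 from rfl] at *
    have e1 : (n + 2 : ℝ) ^ 2 * (n + 1) * (8 ^ (n + 1 + 1) * cc (n + 1 + 1) * JJ f (n + 1 + 1))
      = (n + 1) * 8 ^ (n + 1 + 1) * cc (n + 1) * (((n + 2) ^ 2 - 1 / 16) * JJ f (n + 1 + 1)) := by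
      rw [hcc2]; field_simp
    rw [e1, hJ, hC]
    have e2 : (n + 2 : ℝ) ^ 2 * (n + 1) * (4 * (-Real.sin f) ^ (n + 1 + 1) * u (n + 1 + 1)) =
      4 * (-Real.sin f) ^ (n + 1 + 1) * (n + 2) * ((n + 2) * (n + 1) * u (n + 1 + 1)) := by ring
    rw [e2, hr]
    have e3 : 4 * (-Real.sin f) ^ (n + 1 + 1) * (n + 2 : ℝ) *
      ((n + 1) * (2 * n + 3) * (1912 * u (n + 1)) + 4 * (4 * n + 3) * (4 * n + 5) * u n) =
      -Real.sin f * (n + 2) * (n + 1) * (2 * n + 3) * 1912 * (4 * (-Real.sin f) ^ (n + 1) * u (n + 1))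
      + Real.sin f ^ 2 * (n + 2) * 64 * ((n + 1) ^ 2 - 1 / 16) * (4 * (-Real.sin f) ^ n * u n) := by ring
    rw [e3, ih1, ih0]
    linear_combination (Real.sin f ^ 2 * (n + 2) * 64 * 8 ^ n * JJ f n) * hcc1

lemma Lam_bound {f : ℝ} (hf0 : 0 < f) (hf1 : f ≤ 1 / 239) (hC : Real.cos f = 239 * Real.sin f)
    {u : ℕ → ℝ} (hu : Rec u)
    (h0 : u 0 = Real.sin (f / 4)) (h1 : u 1 = 1912 * Real.sin (f / 4) - 2 * Real.cos (f / 4)) (n : ℕ) :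
    |u n| ≤ 1 / 956 * (4 / 239) ^ n := by
  have hS : 0 < Real.sin f := Real.sin_pos_of_pos_of_lt_pi hf0 (by linarith [Real.pi_gt_three])
  have hJ := JJ_bound hf0 (by linarith) n
  have hL := congrArg abs (Lam_eq hC hu h0 h1 n)
  obtain ⟨hc0, hc1⟩ := cc_bound n
  simp only [abs_mul, abs_pow, abs_neg, abs_of_pos hS, abs_of_nonneg hc0] at hL
  rw [abs_of_pos (show (0 : ℝ) < 4 by norm_num), abs_of_pos (show (0 : ℝ) < 8 by norm_num)] at hL
  have h2 : 1 - Real.cos f ≤ Real.sin f / 478 := by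
    have e := Real.sin_sq_add_cos_sq f
    have e2 := Real.cos_le_one f
    nlinarith
  have h2' : 0 ≤ 1 - Real.cos f := by linarith [Real.cos_le_one f]
  have h3 : (1 - Real.cos f) ^ n ≤ (Real.sin f / 478) ^ n := pow_le_pow_left₀ h2' h2 n
  have h4 : |JJ f n| ≤ (Real.sin f / 478) ^ n * (1 / 239) := by
    refine hJ.trans ?_
    gcongr
  have h5 : 4 * Real.sin f ^ n * |u n| ≤ 8 ^ n * 1 * ((Real.sin f / 478) ^ n * (1 / 239)) := by
    rw [hL]
    gcongr
  have h6 : (8 : ℝ) ^ n * 1 * ((Real.sin f / 478) ^ n * (1 / 239)) = 4 * Real.sin f ^ n * (1 / 956 * (4 / 239) ^ n) := by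
    rw [show (4 / 239 : ℝ) = 8 / 478 by norm_num, div_pow, div_pow]; ring
  rw [h6] at h5
  exact le_of_mul_le_mul_left h5 (by positivity)

lemma exists_f : ∃ f : ℝ, 0 < f ∧ f ≤ 1 / 239 ∧ Real.cos f = 239 * Real.sin f := by
  refine ⟨Real.arctan (1 / 239), ?_, ?_, ?_⟩
  · exact Real.arctan_pos.2 (by norm_num)
  · have h1 : 0 < Real.arctan (1 / 239) := Real.arctan_pos.2 (by norm_num)
    have := Real.lt_tan h1 (Real.arctan_lt_pi_div_two _)
    rw [Real.tan_arctan] at this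
    exact this.le
  · have h := Real.tan_arctan (1 / 239)
    rw [Real.tan_eq_sin_div_cos] at h
    have := (Real.cos_arctan_pos (1 / 239)).ne'
    field_simp at h
    linarith

/-- summary of the Padé data -/
lemma r_bound {u : ℕ → ℝ} (hu : Rec u) (h0 : 0 ≤ u 0) (h0' : u 0 ≤ 1) (h1 : 0 ≤ u 1) (h1' : u 1 ≤ 3825) (n : ℕ) :
    0 ≤ u n ∧ u n ≤ 3825 ^ n := by
  induction n using Nat.twoStepInduction with
  | zero => simpa using ⟨h0, h0'⟩
  | one => simpa using ⟨h1, h1'⟩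
  | more n ih0 ih1 =>
    have hr := hu n
    have hn : (0 : ℝ) ≤ n := Nat.cast_nonneg n
    have hp : 0 < ((n : ℝ) + 2) * (n + 1) := by positivity
    have a0 := ih0.1
    have a1 := ih1.1
    have a2 : (0 : ℝ) ≤ (n + 1) * (2 * n + 3) * (1912 * u (n + 1)) + 4 * (4 * n + 3) * (4 * n + 5) * u n := by
      positivity
    constructor
    · rw [← hr] at a2
      exact nonneg_of_mul_nonneg_right a2 hp
    · apply le_of_mul_le_mul_left _ hp
      rw [hr]
      have b1 : (n + 1 : ℝ) * (2 * n + 3) * (1912 * u (n + 1)) ≤ (n + 1) * (2 * n + 3) * (1912 * 3825 ^ (n + 1)) := by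
        gcongr; exact ih1.2
      have b2 : 4 * (4 * n + 3) * (4 * n + 5) * u n ≤ 4 * (4 * n + 3) * (4 * n + 5) * 3825 ^ n := by
        gcongr; exact ih0.2
      have b3 : (0 : ℝ) < 3825 ^ n := by positivity
      refine (add_le_add b1 b2).trans ?_
      rw [pow_succ, pow_add]
      have : (n + 1 : ℝ) * (2 * n + 3) * (1912 * 3825) + 4 * (4 * n + 3) * (4 * n + 5) ≤ (n + 2) * (n + 1) * 3825 ^ 2 := by
        nlinarith
      nlinarith

lemma det_ne {u v : ℕ → ℝ} (hu : Rec u) (hv : Rec v) (h : u 0 * v 1 - u 1 * v 0 ≠ 0) (n : ℕ) :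
    u n * v (n + 1) - u (n + 1) * v n ≠ 0 := by
  induction n with
  | zero => exact h
  | succ n ih =>
    have h1 := hu n
    have h2 := hv n
    have hn : (0 : ℝ) ≤ n := Nat.cast_nonneg n
    have hp : 0 < ((n : ℝ) + 2) * (n + 1) := by positivity
    intro h3
    rw [show n + 1 + 1 = n + 2 from rfl] at h3
    have e : (4 * (4 * n + 3) * (4 * n + 5)) * (u n * v (n + 1) - u (n + 1) * v n) = 0 := by
      linear_combination (-(((n : ℝ) + 2) * (n + 1))) * h3 + u (n + 1) * h2 - v (n + 1) * h1
    rcases mul_eq_zero.1 e with h4 | h4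
    · have : (0 : ℝ) < (4 * (4 * n + 3) * (4 * n + 5)) := by positivity
      linarith
    · exact ih h4

lemma q_bound {p q ρ : ℝ} (h1 : 0 < p ^ 4 - 6 * p ^ 2 * q ^ 2 + q ^ 4) (hqp : q ^ 2 ≤ p ^ 2)
    (h2 : (4 * p * q * (p ^ 2 - q ^ 2)) ^ 2 ≤ 480 ^ 2) (hρ : ρ ^ 2 = p ^ 2 + q ^ 2) (h0 : 0 < ρ) :
    |q| * ρ ^ 3 ≤ 240 := by
  have e1 : ρ ^ 2 ≤ 2 * p ^ 2 := by linarith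
  have e2 : (ρ ^ 2) ^ 2 ≤ 2 * (p ^ 2 - q ^ 2) ^ 2 := by rw [hρ]; nlinarith
  have e3 : ρ ^ 2 * (ρ ^ 2) ^ 2 ≤ (2 * p ^ 2) * (2 * (p ^ 2 - q ^ 2) ^ 2) := by gcongr
  have e4 : q ^ 2 * (ρ ^ 2 * (ρ ^ 2) ^ 2) ≤ q ^ 2 * ((2 * p ^ 2) * (2 * (p ^ 2 - q ^ 2) ^ 2)) := by gcongr
  apply abs_le_of_sq_le_sq' _ (by norm_num) |>.2
  rw [mul_pow, sq_abs]
  nlinarith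

lemma key_aux (P Q : ℤ) (f W ε κ : ℝ) (hf0 : 0 < f) (hf1 : f ≤ 1 / 239)
    (hC : Real.cos f = 239 * Real.sin f) (hW : 0 < W) (hε : ε ^ 2 = 1) (hκ : 0 < κ) (hκ2 : κ ≤ 2)
    (hre : (P ^ 4 - 6 * P ^ 2 * Q ^ 2 + Q ^ 4 : ℝ) = κ * (239 * W - ε))
    (him : (4 * P * Q * (P ^ 2 - Q ^ 2) : ℝ) = κ * (W + 239 * ε))
    (hqp : (Q * Real.cos (f / 4) - P * Real.sin (f / 4)) ^ 2 ≤
      (P * Real.cos (f / 4) + Q * Real.sin (f / 4)) ^ 2) :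
    P ^ 2 + Q ^ 2 < 3 * 10 ^ 12 := by
  obtain ⟨r, s, hr0, hr1, hs0, hs1, hr, hs⟩ := exists_rs
  have hcs := Real.sin_sq_add_cos_sq (f / 4)
  have hCS := Real.sin_sq_add_cos_sq f
  have hS : 0 < Real.sin f := Real.sin_pos_of_pos_of_lt_pi hf0 (by linarith [Real.pi_gt_three])
  have c2 : Real.cos f = Real.cos (f / 4) ^ 4 - 6 * Real.cos (f / 4) ^ 2 * Real.sin (f / 4) ^ 2 + Real.sin (f / 4) ^ 4 := by
    have e1 : Real.cos f = 2 * Real.cos (f / 2) ^ 2 - 1 := by rw [← Real.cos_two_mul]; ring_nf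
    have e2 : Real.cos (f / 2) = 2 * Real.cos (f / 4) ^ 2 - 1 := by rw [← Real.cos_two_mul]; ring_nf
    rw [e1, e2]
    have : Real.sin (f / 4) ^ 2 = 1 - Real.cos (f / 4) ^ 2 := by linarith
    rw [show Real.sin (f / 4) ^ 4 = (Real.sin (f / 4) ^ 2) ^ 2 by ring, this]
    ring
  have s2 : Real.sin f = 4 * Real.cos (f / 4) * Real.sin (f / 4) * (Real.cos (f / 4) ^ 2 - Real.sin (f / 4) ^ 2) := by
    have e1 : Real.sin f = 2 * Real.sin (f / 2) * Real.cos (f / 2) := by rw [← Real.sin_two_mul]; ring_nf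
    have e2 : Real.cos (f / 2) = 2 * Real.cos (f / 4) ^ 2 - 1 := by rw [← Real.cos_two_mul]; ring_nf
    have e3 : Real.sin (f / 2) = 2 * Real.sin (f / 4) * Real.cos (f / 4) := by rw [← Real.sin_two_mul]; ring_nf
    rw [e1, e2, e3]
    have : Real.sin (f / 4) ^ 2 = 1 - Real.cos (f / 4) ^ 2 := by linarith
    rw [this]
    ring
  have hL := fun n => Lam_bound hf0 hf1 hC
    (u := fun n => r n * Real.sin (f / 4) - s n * Real.cos (f / 4))
    (fun n => by
      have h1 := hr n
      have h2 := hs n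
      simp only at h1 h2 ⊢
      linear_combination Real.sin (f / 4) * h1 - Real.cos (f / 4) * h2)
    (by simp [hr0, hs0]) (by simp [hr1, hs1]) n
  have hrb := fun n => r_bound hr (by simp [hr0]) (by simp [hr0]) (by simp [hr1]) (by simp [hr1]; norm_num) n
  have hsb := fun n => r_bound hs (by simp [hs0]) (by simp [hs0]) (by simp [hs1]) (by simp [hs1]; norm_num) n
  have hdet := fun n => det_ne hr hs (by simp [hr0, hs0, hs1]) n
  beta_reduce at hL hrb hsb hdet
  have hcabs := Real.abs_cos_le_one (f / 4)
  have hsabs := Real.abs_sin_le_one (f / 4)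
  set c := Real.cos (f / 4)
  set t := Real.sin (f / 4)
  set C := Real.cos f
  set S := Real.sin f
  obtain ⟨p, hp⟩ : ∃ p, p = P * c + Q * t := ⟨_, rfl⟩
  obtain ⟨q, hq⟩ : ∃ q, q = Q * c - P * t := ⟨_, rfl⟩
  rw [← hp, ← hq] at hqp
  by_contra hbig
  push Not at hbig
  have hbigR : (3 * 10 ^ 12 : ℝ) ≤ P ^ 2 + Q ^ 2 := by exact_mod_cast hbig
  have hpq : p ^ 2 + q ^ 2 = P ^ 2 + Q ^ 2 := by
    rw [hp, hq]; linear_combination (P ^ 2 + Q ^ 2 : ℝ) * hcs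
  have hS2 : 57122 * S ^ 2 = 1 := by rw [hC] at hCS; linarith
  have x1 : p ^ 4 - 6 * p ^ 2 * q ^ 2 + q ^ 4 = κ * 57122 * S * W := by
    have : p ^ 4 - 6 * p ^ 2 * q ^ 2 + q ^ 4 = (P ^ 4 - 6 * P ^ 2 * Q ^ 2 + Q ^ 4 : ℝ) * C
      + (4 * P * Q * (P ^ 2 - Q ^ 2) : ℝ) * S := by rw [c2, s2, hp, hq]; ring
    rw [this, hre, him, hC]; ring
  have x2 : 4 * p * q * (p ^ 2 - q ^ 2) = κ * 57122 * S * ε := by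
    have : 4 * p * q * (p ^ 2 - q ^ 2) = (4 * P * Q * (P ^ 2 - Q ^ 2) : ℝ) * C
      - (P ^ 4 - 6 * P ^ 2 * Q ^ 2 + Q ^ 4 : ℝ) * S := by rw [c2, s2, hp, hq]; ring
    rw [this, hre, him, hC]; ring
  obtain ⟨ρ, hρ⟩ : ∃ ρ, ρ = √(p ^ 2 + q ^ 2) := ⟨_, rfl⟩
  have hρ2 : ρ ^ 2 = p ^ 2 + q ^ 2 := by rw [hρ, Real.sq_sqrt (by positivity)]
  have hρ0 : 0 < ρ := by rw [hρ]; apply Real.sqrt_pos.2; rw [hpq]; linarith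
  have hqb : |q| * ρ ^ 3 ≤ 240 := by
    refine q_bound ?_ hqp ?_ hρ2 hρ0
    · rw [x1]; positivity
    · rw [x2]
      have : (κ * 57122 * S * ε) ^ 2 = κ ^ 2 * 57122 * (57122 * S ^ 2) * ε ^ 2 := by ring
      rw [this, hS2, hε]
      nlinarith
  have hpρ : |p| ≤ ρ := by rw [hρ]; apply Real.abs_le_sqrt; nlinarith
  have hbnd : ∀ m, ((Q * r m - P * s m : ℤ) : ℝ) ≠ 0 →
      1 ≤ ρ * (1 / 956 * (4 / 239) ^ m) + 240 / ρ ^ 3 * (2 * 3825 ^ m) := by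
    intro m hm
    have h1 : (1 : ℝ) ≤ |((Q * r m - P * s m : ℤ) : ℝ)| := by
      have : (Q * r m - P * s m : ℤ) ≠ 0 := by exact_mod_cast hm
      exact_mod_cast Int.one_le_abs this
    have h2 : ((Q * r m - P * s m : ℤ) : ℝ) = p * (r m * t - s m * c) + q * (r m * c + s m * t) := by
      push_cast; rw [hp, hq]; linear_combination (- (Q * r m - P * s m : ℝ)) * hcs
    rw [h2] at h1
    refine h1.trans ((abs_add_le _ _).trans ?_)
    rw [abs_mul, abs_mul]
    have h3 : |q| ≤ 240 / ρ ^ 3 := by rw [le_div_iff₀ (by positivity)]; exact hqb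
    have h4 : |r m * c + s m * t| ≤ 2 * 3825 ^ m := by
      refine (abs_add_le _ _).trans ?_
      rw [abs_mul, abs_mul, abs_of_nonneg (hrb m).1, abs_of_nonneg (hsb m).1]
      have a1 := (hrb m).2
      have a2 := (hsb m).2
      have b1 := (hrb m).1
      have b2 := (hsb m).1
      have d1 := mul_le_mul_of_nonneg_left hcabs b1
      have d2 := mul_le_mul_of_nonneg_left hsabs b2
      linarith
    have h5 := hL m
    gcongr
  -- choose n
  have hex : ∃ n : ℕ, ρ ≤ 478 * (239 / 4 : ℝ) ^ n := by
    obtain ⟨n, hn⟩ := pow_unbounded_of_one_lt ρ (show (1 : ℝ) < 239 / 4 by norm_num)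
    exact ⟨n, by have := hn.le; have : (0:ℝ) < (239 / 4) ^ n := by positivity
                 linarith⟩
  classical
  have hn := Nat.find_spec hex
  have hmin : ∀ k, k < Nat.find hex → ¬ _ := fun k hk => Nat.find_min hex hk
  set n := Nat.find hex
  have hn3 : 3 ≤ n := by
    by_contra hlt
    have : ρ ≤ 478 * (239 / 4 : ℝ) ^ 2 := hn.trans (by gcongr; norm_num; omega)
    have h2 : ρ ^ 2 ≤ (478 * (239 / 4 : ℝ) ^ 2) ^ 2 := by gcongr
    rw [hρ2, hpq] at h2
    norm_num at h2
    linarith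
  obtain ⟨j, hj⟩ : ∃ j, n = j + 3 := ⟨n - 3, by omega⟩
  have hlow : 478 * (239 / 4 : ℝ) ^ (j + 2) < ρ := by
    have := hmin (j + 2) (by omega)
    push Not at this
    exact this
  have hcube : 478 ^ 3 * ((239 / 4 : ℝ) ^ 3) ^ (j + 2) < ρ ^ 3 := by
    have : (478 * (239 / 4 : ℝ) ^ (j + 2)) ^ 3 < ρ ^ 3 := by gcongr
    calc _ = (478 * (239 / 4 : ℝ) ^ (j + 2)) ^ 3 := by rw [mul_pow, ← pow_mul, ← pow_mul, mul_comm 3]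
      _ < _ := this
  have hcmp : 960 * (3825 : ℝ) ^ (j + 4) ≤ 478 ^ 3 * ((239 / 4 : ℝ) ^ 3) ^ (j + 2) := by
    have h1 : (3825 : ℝ) ^ j ≤ ((239 / 4 : ℝ) ^ 3) ^ j := by gcongr; norm_num
    rw [pow_add, pow_add _ j 2]
    have h2 : 960 * (3825 : ℝ) ^ 4 ≤ 478 ^ 3 * ((239 / 4 : ℝ) ^ 3) ^ 2 := by norm_num
    calc 960 * ((3825 : ℝ) ^ j * 3825 ^ 4) = (3825 : ℝ) ^ j * (960 * (3825 : ℝ) ^ 4) := by ring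
      _ ≤ ((239 / 4 : ℝ) ^ 3) ^ j * (478 ^ 3 * ((239 / 4 : ℝ) ^ 3) ^ 2) := by gcongr
      _ = _ := by ring
  have hfin : ∀ m, n ≤ m → m ≤ n + 1 → ((Q * r m - P * s m : ℤ) : ℝ) = 0 := by
    intro m hm1 hm2
    by_contra hm
    have h1 := hbnd m hm
    have h2 : ρ * (1 / 956 * (4 / 239) ^ m) ≤ 1 / 2 := by
      have e1 : (4 / 239 : ℝ) ^ m ≤ (4 / 239) ^ n := pow_le_pow_of_le_one (by norm_num) (by norm_num) hm1
      have e2 : (239 / 4 : ℝ) ^ n * (4 / 239) ^ n = 1 := by rw [← mul_pow]; norm_num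
      calc ρ * (1 / 956 * (4 / 239) ^ m) ≤ (478 * (239 / 4 : ℝ) ^ n) * (1 / 956 * (4 / 239) ^ n) := by gcongr
        _ = 1 / 2 * ((239 / 4 : ℝ) ^ n * (4 / 239) ^ n) := by ring
        _ = 1 / 2 := by rw [e2, mul_one]
    have h3 : 240 / ρ ^ 3 * (2 * 3825 ^ m) < 1 / 2 := by
      have e1 : (3825 : ℝ) ^ m ≤ 3825 ^ (j + 4) := pow_le_pow_right₀ (by norm_num) (by omega)
      rw [div_mul_eq_mul_div, div_lt_iff₀ (by positivity)]
      linarith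
    linarith
  have f1 := hfin n le_rfl (by omega)
  have f2 := hfin (n + 1) (by omega) le_rfl
  push_cast at f1 f2
  have hd := hdet n
  have g1 : (Q : ℝ) * (r n * s (n + 1) - r (n + 1) * s n) = 0 := by
    linear_combination s (n + 1) * f1 - s n * f2
  have g2 : (P : ℝ) * (r n * s (n + 1) - r (n + 1) * s n) = 0 := by
    linear_combination r (n + 1) * f1 - r n * f2
  have hQ := (mul_eq_zero.1 g1).resolve_right hd
  have hP := (mul_eq_zero.1 g2).resolve_right hd
  rw [hP, hQ] at hbigR
  norm_num at hbigR

lemma key (P Q : ℤ) (W ε κ : ℝ) (hW : 0 < W) (hε : ε ^ 2 = 1) (hκ : 0 < κ) (hκ2 : κ ≤ 2)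
    (hre : (P ^ 4 - 6 * P ^ 2 * Q ^ 2 + Q ^ 4 : ℝ) = κ * (239 * W - ε))
    (him : (4 * P * Q * (P ^ 2 - Q ^ 2) : ℝ) = κ * (W + 239 * ε)) :
    P ^ 2 + Q ^ 2 < 3 * 10 ^ 12 := by
  obtain ⟨f, hf0, hf1, hC⟩ := exists_f
  rcases le_total ((Q * Real.cos (f / 4) - P * Real.sin (f / 4)) ^ 2)
      ((P * Real.cos (f / 4) + Q * Real.sin (f / 4)) ^ 2) with h | h
  · exact key_aux P Q f W ε κ hf0 hf1 hC hW hε hκ hκ2 hre him h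
  · have := key_aux (-Q) P f W ε κ hf0 hf1 hC hW hε hκ hκ2
      (by push_cast; linear_combination hre) (by push_cast; linear_combination him)
      (by push_cast; linarith [h])
    linarith [neg_sq Q]

lemma mod4_A (c e : ℤ) (h : (c + e) % 2 = 1) :
    (c ^ 4 - 6 * c ^ 2 * e ^ 2 + e ^ 4) % 4 = 1 := by
  have h1 : c % 4 = 0 ∨ c % 4 = 1 ∨ c % 4 = 2 ∨ c % 4 = 3 := by omega
  have h2 : e % 4 = 0 ∨ e % 4 = 1 ∨ e % 4 = 2 ∨ e % 4 = 3 := by omega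
  rcases h1 with h1 | h1 | h1 | h1 <;> rcases h2 with h2 | h2 | h2 | h2 <;>
    first
    | (exfalso; omega)
    | simp [pow_succ, Int.add_emod, Int.sub_emod, Int.mul_emod, h1, h2]

lemma gauss (z x : ℤ) (hx : 1 ≤ x) (h : z ^ 2 + 1 = 2 * x ^ 4) :
    ∃ a b : ℤ, (a ^ 4 - 6 * a ^ 2 * b ^ 2 + b ^ 4) + 4 * a * b * (a ^ 2 - b ^ 2) = 1 ∧
      a ^ 2 + b ^ 2 = x := by
  have hz : z % 2 = 1 := by
    rcases Int.emod_two_eq_zero_or_one z with h0 | h0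
    · exfalso
      obtain ⟨k, rfl⟩ : ∃ k, z = 2 * k := ⟨z / 2, by omega⟩
      have : (2 * k) ^ 2 = 2 * (2 * k ^ 2) := by ring
      omega
    · exact h0
  obtain ⟨q, rfl⟩ : ∃ q, z = 2 * q + 1 := ⟨z / 2, by omega⟩
  have hpq : (q + 1) ^ 2 + q ^ 2 = x ^ 4 := by nlinarith
  have ht : x ^ 4 = 2 * (q ^ 2 + q) + 1 := by nlinarith
  set t := q ^ 2 + q with htdef
  have hmul : (⟨q + 1, q⟩ : GaussianInt) * ⟨q + 1, -q⟩ = (x : GaussianInt) ^ 4 := by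
    have : (x : GaussianInt) ^ 4 = ((x ^ 4 : ℤ) : GaussianInt) := by push_cast; ring
    rw [this]
    ext
    · rw [Zsqrtd.re_intCast, ← hpq]; simp; ring
    · rw [Zsqrtd.im_intCast]; simp; ring
  have hcop : IsCoprime (⟨q + 1, q⟩ : GaussianInt) ⟨q + 1, -q⟩ := by
    refine ⟨⟨q + 1 - t, -q - t⟩, ⟨-t, t⟩, ?_⟩
    ext
    · simp; nlinarith
    · simp; nlinarith
  obtain ⟨d, u, hd⟩ := exists_associated_pow_of_mul_eq_pow' hcop hmul
  obtain ⟨c, e⟩ := d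
  have hnu : (u : GaussianInt).norm = 1 := by
    have := (Zsqrtd.norm_eq_one_iff' (d := -1) (by norm_num) (u : GaussianInt)).2 u.isUnit
    exact this
  obtain ⟨⟨m, n⟩, u', hu1, hu2⟩ := u
  simp only [Zsqrtd.norm_def] at hnu
  simp only [] at hd
  have hre := congrArg Zsqrtd.re hd
  have him := congrArg Zsqrtd.im hd
  simp [pow_succ] at hre him
  set A := c ^ 4 - 6 * c ^ 2 * e ^ 2 + e ^ 4 with hA
  set B := 4 * c * e * (c ^ 2 - e ^ 2) with hB
  have hre' : A * m - B * n = q + 1 := by rw [← hre, hA, hB]; ring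
  have him' : A * n + B * m = q := by rw [← him, hA, hB]; ring
  have hmn : m ^ 2 + n ^ 2 = 1 := by nlinarith
  have hN : (c ^ 2 + e ^ 2) ^ 4 = x ^ 4 := by
    have : (c ^ 2 + e ^ 2) ^ 4 = (A * m - B * n) ^ 2 + (A * n + B * m) ^ 2 := by
      have : (A * m - B * n) ^ 2 + (A * n + B * m) ^ 2 = (A ^ 2 + B ^ 2) * (m ^ 2 + n ^ 2) := by ring
      rw [this, hmn, hA, hB]; ring
    rw [this, hre', him', hpq]
  have hcx : c ^ 2 + e ^ 2 = x :=
    (pow_left_inj₀ (by positivity) (by omega) (by norm_num)).1 hN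
  have hxodd : x % 2 = 1 := by
    rcases Int.emod_two_eq_zero_or_one x with h0 | h0
    · exfalso
      obtain ⟨k, rfl⟩ : ∃ k, x = 2 * k := ⟨x / 2, by omega⟩
      have : (2 * k) ^ 4 = 2 * (8 * k ^ 4) := by ring
      omega
    · exact h0
  have hce : (c + e) % 2 = 1 := by
    have e1 : (c * (c - 1)) % 2 = 0 := Int.emod_eq_zero_of_dvd (even_iff_two_dvd.1 (Int.even_mul_pred_self c))
    have e2 : (e * (e - 1)) % 2 = 0 := Int.emod_eq_zero_of_dvd (even_iff_two_dvd.1 (Int.even_mul_pred_self e))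
    have : c ^ 2 + e ^ 2 = c * (c - 1) + e * (e - 1) + (c + e) := by ring
    omega
  have hA4 : A % 4 = 1 := mod4_A c e hce
  have hB4 : B % 4 = 0 := by
    have : B = 4 * (c * e * (c ^ 2 - e ^ 2)) := by rw [hB]; ring
    omega
  have hm1 : m ≤ 1 := by nlinarith
  have hm2 : -1 ≤ m := by nlinarith
  have hn1 : n ≤ 1 := by nlinarith
  have hn2 : -1 ≤ n := by nlinarith
  have hcase : (m = 1 ∧ n = 0) ∨ (m = -1 ∧ n = 0) ∨ (m = 0 ∧ n = 1) ∨ (m = 0 ∧ n = -1) := by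
    clear hd hu1 hu2 hre him hre' him'
    interval_cases m <;> interval_cases n <;> simp at hmn ⊢
  rcases hcase with ⟨rfl, rfl⟩ | ⟨rfl, rfl⟩ | ⟨rfl, rfl⟩ | ⟨rfl, rfl⟩
  · refine ⟨c, -e, ?_, by rw [← hcx]; ring⟩
    have : A - B = 1 := by linarith
    rw [← this, hA, hB]; ring
  · exfalso; omega
  · exfalso; omega
  · refine ⟨c, e, ?_, hcx⟩
    linarith

lemma x_bound (z x : ℤ) (hx : 1 ≤ x) (h : z ^ 2 + 1 = 2 * x ^ 4) : x < 3 * 10 ^ 12 := by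
  obtain ⟨a, b, hab, hx2⟩ := gauss z x hx h
  set Z : ℤ := (a ^ 4 - 6 * a ^ 2 * b ^ 2 + b ^ 4) - 4 * a * b * (a ^ 2 - b ^ 2) with hZ
  have hZ0 : Z ≠ 0 := by
    intro h0
    omega
  have hA : 2 * (a ^ 4 - 6 * a ^ 2 * b ^ 2 + b ^ 4) = 1 + Z := by linarith
  have hB : 2 * (4 * a * b * (a ^ 2 - b ^ 2)) = 1 - Z := by linarith
  have hAr : (2 * (a ^ 4 - 6 * a ^ 2 * b ^ 2 + b ^ 4) : ℝ) = 1 + Z := by exact_mod_cast hA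
  have hBr : (2 * (4 * a * b * (a ^ 2 - b ^ 2)) : ℝ) = 1 - Z := by exact_mod_cast hB
  rcases lt_or_gt_of_ne hZ0 with hneg | hpos
  · have hW : (0 : ℝ) < -Z := by
      have : (Z : ℝ) < 0 := by exact_mod_cast hneg
      linarith
    have := key (3 * a + 2 * b) (3 * b - 2 * a) (-Z) (-1) (1 / 2) hW (by norm_num) (by norm_num)
      (by norm_num) (by push_cast; linear_combination (-119 / 2) * hAr + 60 * hBr)
      (by push_cast; linear_combination (-60) * hAr + (-119 / 2) * hBr)
    nlinarith
  · have hW : (0 : ℝ) < Z := by exact_mod_cast hpos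
    have := key ((3 * a + 2 * b) - (3 * b - 2 * a)) ((3 * a + 2 * b) + (3 * b - 2 * a)) Z 1 2 hW
      (by norm_num) (by norm_num)
      (by norm_num) (by push_cast; linear_combination (238) * hAr - 240 * hBr)
      (by push_cast; linear_combination (240) * hAr + (238) * hBr)
    nlinarith

def pl : ℕ → ℤ × ℤ
  | 0 => (1, 1)
  | n + 1 => (3 * (pl n).1 + 4 * (pl n).2, 2 * (pl n).1 + 3 * (pl n).2)

lemma pl_surj (N : ℕ) : ∀ z X : ℤ, 1 ≤ z → 1 ≤ X → X ≤ N → z ^ 2 + 1 = 2 * X ^ 2 →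
    ∃ j, pl j = (z, X) := by
  induction N with
  | zero => intro z X _ h1 h2; push_cast at h2; omega
  | succ N ih =>
    intro z X hz hX hN h
    by_cases h1 : X = 1
    · subst h1
      refine ⟨0, ?_⟩
      have : z = 1 := by nlinarith
      rw [this]; rfl
    · have hX2 : 2 ≤ X := by omega
      have hzX : X < z := by nlinarith
      have h34 : 4 * X ≤ 3 * z := by
        by_contra hc
        push Not at hc
        have hX5 : X < 5 := by
          nlinarith
        interval_cases X
        · have : z ≤ 2 := by omega
          omega
        · have : z ≤ 3 := by omega
          omega
        · have : z ≤ 5 := by omega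
          interval_cases z
          omega
      have h1z : 1 ≤ 3 * z - 4 * X := by
        rcases eq_or_lt_of_le h34 with h5 | h5
        · obtain ⟨k, rfl⟩ : ∃ k, z = 4 * k := ⟨z / 4, by omega⟩
          have : (4 * k) ^ 2 = 2 * (8 * k ^ 2) := by ring
          omega
        · omega
      have h3X : 1 ≤ 3 * X - 2 * z := by
        by_contra hc
        have : 3 * X ≤ 2 * z := by omega
        nlinarith
      obtain ⟨j, hj⟩ := ih (3 * z - 4 * X) (3 * X - 2 * z) h1z h3X (by push_cast at hN; omega)
        (by nlinarith)
      refine ⟨j + 1, ?_⟩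
      simp only [pl, hj]
      ext <;> simp <;> ring

lemma pl_ge (j : ℕ) : (5 : ℤ) ^ j ≤ (pl j).2 ∧ (pl j).2 ≤ (pl j).1 := by
  induction j with
  | zero => simp [pl]
  | succ n ih =>
    have : (0 : ℤ) < 5 ^ n := by positivity
    simp only [pl, pow_succ]
    constructor <;> linarith [ih.1, ih.2]

lemma pl_sq : ∀ j < 36, j ≠ 0 → j ≠ 3 → ((pl j).2.toNat.sqrt) ^ 2 ≠ (pl j).2.toNat := by
  decide +kernel

lemma x_vals (z x : ℤ) (hz : 1 ≤ z) (hx : 1 ≤ x) (h : z ^ 2 + 1 = 2 * x ^ 4) :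
    x = 1 ∨ x = 13 := by
  have hb := x_bound z x hx h
  obtain ⟨j, hj⟩ := pl_surj (x ^ 2).toNat z (x ^ 2) hz (by nlinarith)
    (by rw [Int.toNat_of_nonneg (by positivity)]) (by rw [h]; ring)
  have hj2 : (pl j).2 = x ^ 2 := by rw [hj]
  have hj36 : j < 36 := by
    by_contra hc
    push Not at hc
    have h1 : (5 : ℤ) ^ 36 ≤ 5 ^ j := pow_le_pow_right₀ (by norm_num) hc
    have h2 := (pl_ge j).1
    have h3 : x ^ 2 < (3 * 10 ^ 12) ^ 2 := by gcongr
    rw [hj2] at h2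
    norm_num at h1 h3
    linarith
  by_cases h0 : j = 0
  · subst h0
    left
    have : x ^ 2 = 1 := hj2.symm
    nlinarith
  by_cases h3 : j = 3
  · subst h3
    right
    have : x ^ 2 = 169 := by rw [← hj2]; decide
    nlinarith
  exfalso
  apply pl_sq j hj36 h0 h3
  rw [hj2]
  obtain ⟨n, rfl⟩ := Int.eq_ofNat_of_zero_le (show 0 ≤ x by omega)
  have : ((n : ℤ) ^ 2).toNat = n ^ 2 := by
    rw [← Int.natCast_pow, Int.toNat_natCast]
  rw [this, Nat.sqrt_eq']

theorem stmt_13 :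
    {p : ℤ × ℤ | 1 ≤ p.1 ∧ 1 ≤ p.2 ∧ p.2 ^ 2 = 8 * p.1 ^ 4 - 4} =
      {(1, 2), (13, 478)} := by
  ext ⟨x, y⟩
  simp only [Set.mem_ofPred_eq, Set.mem_insert_iff, Set.mem_singleton_iff, Prod.mk.injEq]
  constructor
  · rintro ⟨hx, hy, h⟩
    have hy2 : y % 2 = 0 := by
      rcases Int.emod_two_eq_zero_or_one y with h0 | h0
      · exact h0
      · exfalso
        obtain ⟨k, rfl⟩ : ∃ k, y = 2 * k + 1 := ⟨y / 2, by omega⟩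
        have : (2 * k + 1) ^ 2 = 2 * (2 * k ^ 2 + 2 * k) + 1 := by ring
        omega
    obtain ⟨z, rfl⟩ : ∃ z, y = 2 * z := ⟨y / 2, by omega⟩
    have hz : z ^ 2 + 1 = 2 * x ^ 4 := by linarith [show (2 * z) ^ 2 = 4 * z ^ 2 by ring]
    rcases x_vals z x (by omega) hx hz with rfl | rfl
    · left
      refine ⟨rfl, ?_⟩
      nlinarith
    · right
      refine ⟨rfl, ?_⟩
      nlinarith
  · rintro (⟨rfl, rfl⟩ | ⟨rfl, rfl⟩) <;> norm_num
end

section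
/- Let t ≥ 1 be an integer such that D = t² + 4 is squarefree. Then ε = (t + √D)/2 is an algebraic integer in the real quadratic field ℚ(√D), it is a unit of the ring of integers of ℚ(√D) with field norm Norm_{ℚ(√D)/ℚ}(ε) = -1, and it is the fundamental unit: every unit u of the ring of integers of ℚ(√D) whose image under the real embedding sending √D to the positive square root is greater than 1 satisfies u ≥ ε. -/
lemma aux_int (q : ℚ) (h : IsIntegral ℤ (q : ℝ)) : ∃ m : ℤ, (m : ℚ) = q := by
  have h1 : IsIntegral ℤ q := by
    have h2 : IsIntegral ℤ (algebraMap ℚ ℝ q) := h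
    exact (isIntegral_algebraMap_iff (algebraMap ℚ ℝ).injective).1 h2
  exact IsIntegrallyClosed.isIntegral_iff.1 h1

lemma aux_mem (D : ℤ) (s : ℝ) (hs : s ^ 2 = D) (u : ℝ)
    (hu : u ∈ Algebra.adjoin ℚ ({s} : Set ℝ)) : ∃ a b : ℚ, u = a + b * s := by
  induction hu using Algebra.adjoin_induction with
  | mem x hx => exact ⟨0, 1, by simpa using hx⟩
  | algebraMap r => exact ⟨r, 0, by simp⟩
  | add x y _ _ hx hy =>
    obtain ⟨a, b, rfl⟩ := hx
    obtain ⟨c, d, rfl⟩ := hy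
    exact ⟨a + c, b + d, by push_cast; ring⟩
  | mul x y _ _ hx hy =>
    obtain ⟨a, b, rfl⟩ := hx
    obtain ⟨c, d, rfl⟩ := hy
    refine ⟨a * c + D * b * d, a * d + b * c, ?_⟩
    push_cast
    linear_combination (b : ℝ) * d * hs

lemma aux_irr (s : ℝ) (hi : Irrational s) (a b : ℚ) (h : (a : ℝ) + b * s = 0) :
    a = 0 ∧ b = 0 := by
  have hb : b = 0 := by
    by_contra hb
    apply hi
    refine ⟨-a / b, ?_⟩
    have : (b : ℝ) ≠ 0 := by exact_mod_cast hb
    push_cast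
    field_simp
    linarith
  subst hb
  simp at h
  exact ⟨h, rfl⟩

lemma aux_conj (D : ℤ) (s : ℝ) (hs : s ^ 2 = D) (hi : Irrational s) (a b : ℚ)
    (h : IsIntegral ℤ ((a : ℝ) + b * s)) : IsIntegral ℤ ((a : ℝ) - b * s) := by
  obtain ⟨p, hp, hp0⟩ := h
  have key : ∀ p : Polynomial ℤ, ∃ A B : ℚ,
      Polynomial.aeval ((a : ℝ) + b * s) p = A + B * s ∧
      Polynomial.aeval ((a : ℝ) - b * s) p = A - B * s := by
    intro p
    induction p using Polynomial.induction_on with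
    | C r => exact ⟨r, 0, by simp, by simp⟩
    | add p q hp hq =>
      obtain ⟨A, B, h1, h2⟩ := hp
      obtain ⟨A', B', h3, h4⟩ := hq
      refine ⟨A + A', B + B', ?_, ?_⟩
      · rw [map_add, h1, h3]; push_cast; ring
      · rw [map_add, h2, h4]; push_cast; ring
    | monomial n r hn =>
      obtain ⟨A, B, h1, h2⟩ := hn
      refine ⟨A * a + D * B * b, A * b + B * a, ?_, ?_⟩
      · rw [pow_succ, ← mul_assoc, map_mul, h1, Polynomial.aeval_X]; push_cast
        linear_combination (b : ℝ) * B * hs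
      · rw [pow_succ, ← mul_assoc, map_mul, h2, Polynomial.aeval_X]; push_cast
        linear_combination (b : ℝ) * B * hs
  obtain ⟨A, B, h1, h2⟩ := key p
  refine ⟨p, hp, ?_⟩
  have h0 : Polynomial.aeval ((a : ℝ) + b * s) p = 0 := hp0
  obtain ⟨rfl, rfl⟩ := aux_irr s hi A B (by rw [← h1, h0])
  have : Polynomial.aeval ((a : ℝ) - b * s) p = 0 := by rw [h2]; simp
  exact this

lemma aux_norm (D : ℤ) (s : ℝ) (hs : s ^ 2 = D) (hi : Irrational s) (a b : ℚ)
    (h : IsIntegral ℤ ((a : ℝ) + b * s)) :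
    (∃ m : ℤ, (m : ℚ) = 2 * a) ∧ ∃ N : ℤ, (N : ℚ) = a ^ 2 - D * b ^ 2 := by
  have h' := aux_conj D s hs hi a b h
  constructor
  · apply aux_int
    have e : ((2 * a : ℚ) : ℝ) = ((a : ℝ) + b * s) + ((a : ℝ) - b * s) := by
      push_cast; ring
    rw [e]
    exact h.add h'
  · apply aux_int
    have e : ((a ^ 2 - D * b ^ 2 : ℚ) : ℝ) = ((a : ℝ) + b * s) * ((a : ℝ) - b * s) := by
      push_cast
      linear_combination (b : ℝ) ^ 2 * hs
    rw [e]
    exact h.mul h'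

lemma aux_sf (D : ℤ) (hD : Squarefree D) (q : ℚ) (k : ℤ) (h : D * q ^ 2 = k) :
    ∃ n : ℤ, (n : ℚ) = q := by
  have hd : (q.den : ℚ) ≠ 0 := by exact_mod_cast q.den_nz
  have h1 : D * q.num ^ 2 = k * (q.den : ℤ) ^ 2 := by
    have : (D : ℚ) * q.num ^ 2 = k * (q.den : ℚ) ^ 2 := by
      rw [← h]
      have := Rat.mul_den_eq_num q
      rw [← this]; ring
    exact_mod_cast this
  have hc : IsCoprime ((q.den : ℤ) ^ 2) (q.num ^ 2) := by
    apply IsCoprime.pow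
    rw [Int.isCoprime_iff_gcd_eq_one, Int.gcd_comm]
    simpa [Int.gcd] using q.reduced
  have h2 : (q.den : ℤ) * q.den ∣ D := by
    rw [← pow_two]
    exact hc.dvd_of_dvd_mul_right ⟨k, by rw [h1]; ring⟩
  have h3 := hD _ h2
  have h4 : q.den = 1 := by simpa using Int.isUnit_iff_natAbs_eq.1 h3
  exact ⟨q.num, Rat.coe_int_num_of_den_eq_one h4⟩

/-- For an integer `t ≥ 1` with `D = t² + 4` squarefree, `ε = (t + √D)/2` is an
algebraic integer lying in `ℚ(√D) ⊆ ℝ`, it is a unit of the ring of integers of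
`ℚ(√D)` of norm `ε·ε̄ = -1`, and it is the fundamental unit: every unit `u > 1`
of the ring of integers satisfies `ε ≤ u`. -/
theorem stmt_16 (t : ℤ) (ht : 1 ≤ t) (hsf : Squarefree (t ^ 2 + 4)) :
    IsIntegral ℤ (((t : ℝ) + Real.sqrt ((t : ℝ) ^ 2 + 4)) / 2) ∧
    ((t : ℝ) + Real.sqrt ((t : ℝ) ^ 2 + 4)) / 2 ∈
      Algebra.adjoin ℚ ({Real.sqrt ((t : ℝ) ^ 2 + 4)} : Set ℝ) ∧
    (∃ η : ℝ, (η ∈ Algebra.adjoin ℚ ({Real.sqrt ((t : ℝ) ^ 2 + 4)} : Set ℝ) ∧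
        IsIntegral ℤ η) ∧
      (((t : ℝ) + Real.sqrt ((t : ℝ) ^ 2 + 4)) / 2) * η = 1) ∧
    (((t : ℝ) + Real.sqrt ((t : ℝ) ^ 2 + 4)) / 2) *
        (((t : ℝ) - Real.sqrt ((t : ℝ) ^ 2 + 4)) / 2) = -1 ∧
    (∀ u : ℝ, u ∈ Algebra.adjoin ℚ ({Real.sqrt ((t : ℝ) ^ 2 + 4)} : Set ℝ) →
      IsIntegral ℤ u →
      (∃ w : ℝ, (w ∈ Algebra.adjoin ℚ ({Real.sqrt ((t : ℝ) ^ 2 + 4)} : Set ℝ) ∧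
          IsIntegral ℤ w) ∧ u * w = 1) →
      1 < u → ((t : ℝ) + Real.sqrt ((t : ℝ) ^ 2 + 4)) / 2 ≤ u) := by
  have hs0 : Real.sqrt ((t : ℝ) ^ 2 + 4) ^ 2 = (t : ℝ) ^ 2 + 4 := Real.sq_sqrt (by positivity)
  have hspos : 0 < Real.sqrt ((t : ℝ) ^ 2 + 4) := Real.sqrt_pos.2 (by positivity)
  have hi : Irrational (Real.sqrt ((t : ℝ) ^ 2 + 4)) := by
    have h := irrational_sqrt_intCast_iff_of_nonneg (z := t ^ 2 + 4) (by positivity)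
    push_cast at h
    rw [h]
    rintro ⟨r, hr⟩
    have h1 := hsf r ⟨1, by rw [hr]; ring⟩
    rcases Int.isUnit_iff.1 h1 with rfl | rfl <;> nlinarith
  set s := Real.sqrt ((t : ℝ) ^ 2 + 4) with hsdef
  clear_value s
  have hs : s ^ 2 = ((t ^ 2 + 4 : ℤ) : ℝ) := by push_cast; exact hs0
  have hsm : s ∈ Algebra.adjoin ℚ ({s} : Set ℝ) := Algebra.subset_adjoin rfl
  have hmem : ∀ a b : ℚ, (a : ℝ) + b * s ∈ Algebra.adjoin ℚ ({s} : Set ℝ) := by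
    intro a b
    exact add_mem (Subalgebra.algebraMap_mem _ a) (mul_mem (Subalgebra.algebraMap_mem _ b) hsm)
  have hint : ∀ x : ℝ, x ^ 2 - t * x - 1 = 0 → IsIntegral ℤ x := by
    intro x hx
    refine ⟨Polynomial.X ^ 2 + (Polynomial.C (-t) * Polynomial.X + Polynomial.C (-1)), ?_, ?_⟩
    · apply Polynomial.monic_X_pow_add
      exact lt_of_le_of_lt Polynomial.degree_linear_le (by norm_num)
    · rw [← hx]
      simp only [Polynomial.eval₂_add, Polynomial.eval₂_mul, Polynomial.eval₂_pow,
        Polynomial.eval₂_X, Polynomial.eval₂_C]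
      simp only [eq_intCast]
      push_cast
      ring
  have e1 : IsIntegral ℤ (((t : ℝ) + s) / 2) := by
    apply hint; linear_combination hs0 / 4
  have e2 : IsIntegral ℤ (((t : ℝ) - s) / 2) := by
    apply hint; linear_combination hs0 / 4
  have e3 : (((t : ℝ) + s) / 2) * (((t : ℝ) - s) / 2) = -1 := by
    linear_combination -hs0 / 4
  refine ⟨e1, ?_, ⟨-(((t : ℝ) - s) / 2), ⟨?_, e2.neg⟩, by linear_combination -e3⟩, e3, ?_⟩
  · convert hmem (t / 2) (1 / 2) using 1
    push_cast; ring
  · convert hmem (-t / 2) (1 / 2) using 1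
    push_cast; ring
  rintro u hu hui ⟨w, ⟨hw, hwi⟩, huw⟩ hu1
  obtain ⟨a, b, rfl⟩ := aux_mem _ s hs u hu
  obtain ⟨c, d, rfl⟩ := aux_mem _ s hs w hw
  obtain ⟨⟨m, hm⟩, N, hN⟩ := aux_norm _ s hs hi a b hui
  obtain ⟨-, M, hM⟩ := aux_norm _ s hs hi c d hwi
  obtain ⟨h1, h2⟩ := aux_irr s hi (a * c + (t ^ 2 + 4 : ℤ) * b * d - 1) (a * d + b * c) (by
    push_cast at hs ⊢
    linear_combination huw - (b : ℝ) * d * hs)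
  have hNM : N * M = 1 := by
    have : (N : ℚ) * M = 1 := by
      rw [hN, hM]
      linear_combination (a * c + (t ^ 2 + 4 : ℤ) * b * d + 1) * h1
        - (t ^ 2 + 4 : ℤ) * (a * d + b * c) * h2
    exact_mod_cast this
  obtain ⟨n, hn⟩ := aux_sf _ hsf (2 * b) (m ^ 2 - 4 * N) (by
    push_cast at hN ⊢; rw [hm, hN]; ring)
  have hmn : m ^ 2 - (t ^ 2 + 4) * n ^ 2 = 4 * N := by
    have : (m : ℚ) ^ 2 - (t ^ 2 + 4) * n ^ 2 = 4 * N := by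
      push_cast at hN
      rw [hm, hn, hN]; ring
    exact_mod_cast this
  have ha : (a : ℝ) = m / 2 := by
    have : a = m / 2 := by rw [hm]; ring
    rw [this]; push_cast; rfl
  have hb : (b : ℝ) = n / 2 := by
    have : b = n / 2 := by rw [hn]; ring
    rw [this]; push_cast; rfl
  have hN1 : N = 1 ∨ N = -1 := Int.isUnit_iff.1 (IsUnit.of_mul_eq_one _ hNM)
  have hmnR : (m : ℝ) ^ 2 - (t ^ 2 + 4) * n ^ 2 = 4 * N := by exact_mod_cast hmn
  rw [ha, hb] at hu1 ⊢
  have hprod : ((m : ℝ) / 2 + n / 2 * s) * ((m : ℝ) / 2 - n / 2 * s) = N := by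
    linear_combination hmnR / 4 - (n : ℝ) ^ 2 / 4 * hs0
  have habs : |(m : ℝ) / 2 - n / 2 * s| < 1 := by
    have hNa : |(N : ℝ)| = 1 := by rcases hN1 with rfl | rfl <;> simp
    rw [← hprod, abs_mul, abs_of_pos (by linarith : (0 : ℝ) < m / 2 + n / 2 * s)] at hNa
    by_contra hcon
    push Not at hcon
    nlinarith
  obtain ⟨hl, hr⟩ := abs_lt.1 habs
  have hm0 : 0 < m := by
    have : (0 : ℝ) < m := by linarith
    exact_mod_cast this
  have hn0 : 0 < n := by
    have : (0 : ℝ) < n := by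
      have : 0 < n * s := by linarith
      exact (pos_iff_pos_of_mul_pos this).2 hspos
    exact_mod_cast this
  have htm : t ≤ m := by
    have hn2 : 1 ≤ n ^ 2 := by nlinarith
    by_contra hcon
    push Not at hcon
    rcases hN1 with rfl | rfl <;> nlinarith [sq_nonneg t]
  have htm' : (t : ℝ) ≤ m := by exact_mod_cast htm
  have hn' : (1 : ℝ) ≤ n := by exact_mod_cast hn0
  nlinarith
end

section
/- There exist infinitely many pairwise GL₂(ℤ)-inequivalent binary cubic forms F(x, y) = a·x³ + b·x²y + c·xy² + d·y³ with integer coefficients, content 1 (gcd(a, b, c, d) = 1), and nonzero discriminant, such that for each such F there is a constant c₀ > 0 for which N_F(m) > c₀·(log m)^{17/19} holds for infinitely many positive integers m, where N_F(m) = #{(x, y) ∈ ℤ² : F(x, y) = m}. -/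
/-- The value of the binary cubic form with coefficients `(a, b, c, d)` at `(x, y)`. -/
def cubicVal (F : ℤ × ℤ × ℤ × ℤ) (x y : ℤ) : ℤ :=
  F.1 * x ^ 3 + F.2.1 * x ^ 2 * y + F.2.2.1 * x * y ^ 2 + F.2.2.2 * y ^ 3

/-- The discriminant of the binary cubic form with coefficients `(a, b, c, d)`. -/
def cubicDisc (F : ℤ × ℤ × ℤ × ℤ) : ℤ :=
  18 * F.1 * F.2.1 * F.2.2.1 * F.2.2.2 - 4 * F.2.1 ^ 3 * F.2.2.2
    + F.2.1 ^ 2 * F.2.2.1 ^ 2 - 4 * F.1 * F.2.2.1 ^ 3 - 27 * F.1 ^ 2 * F.2.2.2 ^ 2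

/-- The content of the binary cubic form with coefficients `(a, b, c, d)`. -/
def cubicContent (F : ℤ × ℤ × ℤ × ℤ) : ℕ :=
  Nat.gcd (Nat.gcd F.1.natAbs F.2.1.natAbs) (Nat.gcd F.2.2.1.natAbs F.2.2.2.natAbs)

/-- `GL₂(ℤ)`-equivalence of binary cubic forms. -/
def cubicEquiv (F F' : ℤ × ℤ × ℤ × ℤ) : Prop :=
  ∃ p q r s : ℤ, (p * s - q * r = 1 ∨ p * s - q * r = -1) ∧
    ∀ x y : ℤ, cubicVal F' x y = cubicVal F (p * x + q * y) (r * x + s * y)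

/-- The number of integral representations of `m` by the binary cubic form `F`. -/
noncomputable def numReps (F : ℤ × ℤ × ℤ × ℤ) (m : ℤ) : ℕ :=
  Set.ncard {xy : ℤ × ℤ | cubicVal F xy.1 xy.2 = m}

section
set_option maxRecDepth 4000

/-- The constant of Elkies' curve. -/
def elkK : ℤ := 908800736629952526116772283648363

lemma elkK_pos : 0 < elkK := by norm_num [elkK]

lemma elkK_not_cube (x : ℚ) : x ^ 3 ≠ (elkK : ℚ) := by
  intro h
  have hd : x.den ^ 3 = 1 := by
    rw [← Rat.den_pow, h]; simp
  have hd1 : x.den = 1 := by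
    simpa using hd
  have hx : x = (x.num : ℚ) := by
    rw [Rat.den_eq_one_iff] at hd1; exact hd1.symm
  rw [hx] at h
  have h' : x.num ^ 3 = elkK := by exact_mod_cast h
  generalize x.num = n at h'
  unfold elkK at h'
  rcases le_or_gt n 96862622570 with hn | hn
  · rcases le_or_gt n 0 with h0 | h0
    · nlinarith [sq_nonneg n]
    · have : n ^ 3 ≤ 96862622570 ^ 3 := by gcongr
      norm_num at this; omega
  · have : (96862622571 : ℤ) ^ 3 ≤ n ^ 3 := by
      have : (96862622571 : ℤ) ≤ n := by omega
      gcongr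
    norm_num at this; omega

/-- Elkies' curve of rank at least 17. -/
def elkE : WeierstrassCurve ℚ := ⟨0, 0, 0, 0, -(elkK : ℚ)⟩

lemma elkE_eq {x y : ℚ} : elkE.toAffine.Equation x y ↔ y ^ 2 = x ^ 3 - elkK := by
  rw [WeierstrassCurve.Affine.equation_iff]
  simp only [elkE]
  constructor <;> intro h <;> linarith

lemma elkE_Δ : elkE.Δ = -432 * (elkK : ℚ) ^ 2 := by
  simp only [WeierstrassCurve.Δ, WeierstrassCurve.b₂, WeierstrassCurve.b₄, WeierstrassCurve.b₆,
    WeierstrassCurve.b₈, elkE]; ring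

instance : elkE.IsElliptic := by
  constructor
  rw [elkE_Δ, isUnit_iff_ne_zero]
  have : (elkK : ℚ) ≠ 0 := by exact_mod_cast elkK_pos.ne'
  positivity

abbrev EPt := elkE.toAffine.Point

lemma elkE_negY (x y : ℚ) : elkE.toAffine.negY x y = -y := by
  simp [WeierstrassCurve.Affine.negY, elkE]

lemma elkE_y_ne {x y : ℚ} (h : elkE.toAffine.Nonsingular x y) : y ≠ 0 := by
  rintro rfl
  have := elkE_eq.1 h.1
  exact elkK_not_cube x (by linarith)

lemma elkE_x_ne {x y : ℚ} (h : elkE.toAffine.Nonsingular x y) : x ≠ 0 := by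
  rintro rfl
  have := elkE_eq.1 h.1
  have h2 : (0:ℚ) < elkK := by exact_mod_cast elkK_pos
  nlinarith [sq_nonneg y]

lemma elkE_two_torsion (P : EPt) (h : (2 : ℤ) • P = 0) : P = 0 := by
  rcases P with _ | ⟨x, y, hP⟩
  · rfl
  · exfalso
    rw [two_zsmul, add_eq_zero_iff_eq_neg, WeierstrassCurve.Affine.Point.neg_some,
      WeierstrassCurve.Affine.Point.some.injEq, elkE_negY] at h
    have := elkE_y_ne hP
    apply this; linarith [h.2]

open WeierstrassCurve.Affine WeierstrassCurve.Affine.Point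

lemma elkE_addX (x₁ x₂ l : ℚ) : elkE.toAffine.addX x₁ x₂ l = l ^ 2 - x₁ - x₂ := by
  simp [WeierstrassCurve.Affine.addX, elkE]

lemma addSub_eval (v : Fin 3 → ℚ) :
    (fun i => (WeierstrassCurve.addSubMap elkE i).eval v) =
      ![v 0 ^ 2 + 4 * elkK * v 1 * v 2, 2 * v 1 * v 0 - 4 * elkK * v 2 ^ 2,
        v 1 ^ 2 - 4 * v 0 * v 2] := by
  ext i
  fin_cases i <;>
    simp [WeierstrassCurve.addSubMap, WeierstrassCurve.b₂, WeierstrassCurve.b₄,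
      WeierstrassCurve.b₆, WeierstrassCurve.b₈, elkE] <;> ring

lemma sym2x_addSub (P Q : EPt) :
    ∃ c : ℚ, c ≠ 0 ∧ (fun i => (WeierstrassCurve.addSubMap elkE i).eval (sym2x P Q)) =
      c • sym2x (P + Q) (P - Q) := by
  rw [addSub_eval]
  rcases P with _ | ⟨x₁, y₁, h₁⟩
  · refine ⟨1, one_ne_zero, ?_⟩
    rw [← WeierstrassCurve.Affine.Point.zero_def]
    rcases Q with _ | ⟨x₂, y₂, h₂⟩
    · rw [← WeierstrassCurve.Affine.Point.zero_def]
      ext i; fin_cases i <;> simp [sym2x]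
    · rw [zero_add, zero_sub, sym2x_neg_right]
      ext i; fin_cases i <;> simp [sym2x] <;> ring
  rcases Q with _ | ⟨x₂, y₂, h₂⟩
  · refine ⟨1, one_ne_zero, ?_⟩
    rw [← WeierstrassCurve.Affine.Point.zero_def]
    rw [add_zero, sub_zero]
    ext i; fin_cases i <;> simp [sym2x] <;> ring
  have e₁ := elkE_eq.1 h₁.1
  have e₂ := elkE_eq.1 h₂.1
  by_cases hx : x₁ = x₂
  · have key : ∀ (P : EPt) (hP : ∃ x y h, P = some x y h), ∃ c : ℚ, c ≠ 0 ∧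
        (![(sym2x P P) 0 ^ 2 + 4 * elkK * (sym2x P P) 1 * (sym2x P P) 2,
          2 * (sym2x P P) 1 * (sym2x P P) 0 - 4 * elkK * (sym2x P P) 2 ^ 2,
          (sym2x P P) 1 ^ 2 - 4 * (sym2x P P) 0 * (sym2x P P) 2] : Fin 3 → ℚ) =
        c • sym2x (P + P) 0 := by
      rintro P ⟨x, y, h, rfl⟩
      have e := elkE_eq.1 h.1
      have hy := elkE_y_ne h
      have hy' : y ≠ elkE.toAffine.negY x y := by
        rw [elkE_negY]; intro h; apply hy; linarith
      refine ⟨4 * y ^ 2, by positivity, ?_⟩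
      rw [add_self_of_Y_ne hy']
      have hs : elkE.toAffine.slope x x y y = 3 * x ^ 2 / (2 * y) := by
        rw [slope_of_Y_ne rfl hy', elkE_negY]
        simp only [elkE]; congr 1 <;> ring
      ext i
      fin_cases i
      · have a1 : elkE.toAffine.a₁ = 0 := rfl
        have a2 : elkE.toAffine.a₂ = 0 := rfl
        simp [sym2x, hs, a1, a2]
        field_simp
        rw [e]; ring
      · simp [sym2x]; rw [e]; ring
      · simp [sym2x]; ring
    rcases (X_eq_iff (h₁ := h₁) (h₂ := h₂)).mp hx with h | h
    · rw [← h, sub_self]; exact key _ ⟨_, _, _, rfl⟩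
    · rw [eq_neg_iff_add_eq_zero] at h
      rw [h]
      have h' : some x₂ y₂ h₂ = - some x₁ y₁ h₁ := by
        rw [eq_neg_iff_add_eq_zero, add_comm]; exact h
      rw [h', sub_neg_eq_add, sym2x_neg_right, sym2x_comm 0]
      exact key _ ⟨_, _, _, rfl⟩
  · have hx' : x₁ - x₂ ≠ 0 := sub_ne_zero.2 hx
    refine ⟨(x₁ - x₂) ^ 2, by positivity, ?_⟩
    rw [sub_eq_add_neg (some x₁ y₁ h₁), neg_some, add_of_X_ne hx, add_of_X_ne hx]
    simp only [slope_of_X_ne hx, elkE_addX, elkE_negY, sym2x_some_some]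
    have ek : (elkK : ℚ) = x₁ ^ 3 - y₁ ^ 2 := by linarith
    have ey : y₂ ^ 2 = x₂ ^ 3 - x₁ ^ 3 + y₁ ^ 2 := by linarith
    have ey2 : y₂ ^ 4 = (x₂ ^ 3 - x₁ ^ 3 + y₁ ^ 2) ^ 2 := by rw [← ey]; ring
    ext i
    fin_cases i
    · simp [ek]; field_simp
      linear_combination (2 * (x₁ - x₂) ^ 2 * (x₁ + x₂) + 2 * y₁ ^ 2) * ey - ey2
    · simp [ek]; field_simp
      linear_combination (-2) * ey
    · simp; ring

/-- Naive height. -/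
noncomputable def ht (P : EPt) : ℝ := Height.logHeight P.xRep

lemma ht_nonneg (P : EPt) : 0 ≤ ht P := Height.logHeight_nonneg _

lemma ht_par : ∃ C : ℝ, 0 ≤ C ∧ ∀ P Q : EPt, ht (P + Q) + ht (P - Q) ≤ 2 * ht P + 2 * ht Q + C := by
  obtain ⟨C₁, h₁⟩ := WeierstrassCurve.abs_logHeight_addSubMap_sub_two_mul_logHeight_le elkE
  obtain ⟨C₂, h₂⟩ := Height.abs_logHeight_sym2_sub_le ℚ
  have h₃ : ∀ P Q : EPt, |Height.logHeight (sym2x P Q) - (ht P + ht Q)| ≤ C₂ := by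
    intro P Q
    have e : ∀ P : EPt, P.xRep = ![P.xRep 0, P.xRep 1] := by
      intro P; ext i; fin_cases i <;> rfl
    have hP := xRep_ne_zero P
    have hQ := xRep_ne_zero Q
    rw [e] at hP hQ
    have := h₂ hP hQ
    rw [← e P, ← e Q] at this
    exact this
  refine ⟨|C₁ + 3 * C₂|, abs_nonneg _, fun P Q => ?_⟩
  obtain ⟨c, hc, h⟩ := sym2x_addSub P Q
  have a := h₁ (sym2x P Q)
  rw [h, Height.logHeight_smul_eq_logHeight _ hc] at a
  have b := h₃ P Q
  have b' := h₃ (P + Q) (P - Q)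
  rw [abs_le] at a b b'
  have := le_abs_self (C₁ + 3 * C₂)
  linarith

lemma ht_nsmul {C : ℝ} (hC : ∀ P Q : EPt, ht (P + Q) + ht (P - Q) ≤ 2 * ht P + 2 * ht Q + C)
    (P : EPt) (n : ℕ) : ht (n • P) ≤ (ht 0 + 2 * ht P + |C|) * ((n : ℝ) ^ 2 + 1) := by
  set A := 2 * ht P + |C| with hA
  have hP := ht_nonneg P
  have h0 := ht_nonneg 0
  have hA0 : 0 ≤ A := by positivity
  have hC' := le_abs_self C
  have step : ∀ n : ℕ, ht ((n + 1) • P) - ht (n • P) ≤ (n + 1) * A := by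
    intro n
    induction n with
    | zero => simp; linarith [abs_nonneg C]
    | succ n ih =>
      have := hC ((n + 1) • P) P
      have e1 : (n + 1) • P - P = n • P := by rw [succ_nsmul]; abel
      have e2 : (n + 1) • P + P = (n + 1 + 1) • P := by rw [succ_nsmul P (n + 1)]
      rw [e1, e2] at this
      push_cast
      linarith
  have : ht (n • P) ≤ ht 0 + A * n ^ 2 := by
    induction n with
    | zero => simp
    | succ n ih =>
      have := step n
      push_cast
      have : (0:ℝ) ≤ n := n.cast_nonneg
      nlinarith
  have hn : (0:ℝ) ≤ (n:ℝ) ^ 2 := by positivity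
  nlinarith

lemma ht_sum {ι : Type*} (s : Finset ι) (P : ι → EPt) : ∃ C : ℝ, 0 ≤ C ∧ ∀ n : ι → ℕ, ∀ N : ℕ,
    1 ≤ N → (∀ i, n i ≤ N) → ht (∑ i ∈ s, n i • P i) ≤ C * (N : ℝ) ^ 2 := by
  classical
  obtain ⟨C₀, hC₀, hC⟩ := ht_par
  induction s using Finset.induction_on with
  | empty =>
    refine ⟨ht 0, ht_nonneg _, fun n N hN _ => ?_⟩
    simp only [Finset.sum_empty]
    have : (1:ℝ) ≤ N := by exact_mod_cast hN
    exact le_mul_of_one_le_right (ht_nonneg 0) (by nlinarith)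
  | insert a s ha ih =>
    obtain ⟨C, hC1, ih⟩ := ih
    refine ⟨2 * (2 * (ht 0 + 2 * ht (P a) + |C₀|)) + 2 * C + C₀, ?_, fun n N hN h => ?_⟩
    · have := ht_nonneg 0
      have := ht_nonneg (P a)
      positivity
    rw [Finset.sum_insert ha]
    have h1 := hC (n a • P a) (∑ i ∈ s, n i • P i)
    have h2 := ht_nonneg (n a • P a - ∑ i ∈ s, n i • P i)
    have h3 := ih n N hN h
    have h4 := ht_nsmul hC (P a) (n a)
    have h5 : (1:ℝ) ≤ N := by exact_mod_cast hN
    have h6 : (n a : ℝ) ≤ N := by exact_mod_cast h a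
    have h7 : (n a : ℝ) ^ 2 + 1 ≤ 2 * N ^ 2 := by
      have : (0:ℝ) ≤ n a := by positivity
      nlinarith
    have h8 : (ht 0 + 2 * ht (P a) + |C₀|) * ((n a : ℝ) ^ 2 + 1) ≤
        (ht 0 + 2 * ht (P a) + |C₀|) * (2 * N ^ 2) := by
      have := ht_nonneg 0
      have := ht_nonneg (P a)
      gcongr
    have h9 : C₀ ≤ C₀ * (N:ℝ) ^ 2 := by
      have : (1:ℝ) ≤ (N:ℝ) ^ 2 := by nlinarith
      nlinarith
    nlinarith
open WeierstrassCurve.Affine WeierstrassCurve.Affine.Point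

section chars
variable {L : Type*} [Field L] [CharZero L]

/-- The `x - θ` map. -/
noncomputable def dl (θ : L) : EPt → L
  | .zero => 1
  | .some x _ _ => (x : L) - θ

lemma dl_zero (θ : L) : dl θ 0 = 1 := rfl
lemma dl_some (θ : L) {x y : ℚ} (h : elkE.toAffine.Nonsingular x y) :
    dl θ (some x y h) = (x : L) - θ := rfl

lemma dl_ne {θ : L} (hθ : θ ^ 3 = (elkK : L)) (P : EPt) : dl θ P ≠ 0 := by
  rcases P with _ | ⟨x, y, h⟩
  · exact one_ne_zero
  · rw [dl_some, sub_ne_zero]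
    rintro rfl
    apply elkK_not_cube x
    exact_mod_cast hθ

lemma dl_neg (θ : L) (P : EPt) : dl θ (-P) = dl θ P := by
  rcases P with _ | ⟨x, y, h⟩ <;> rfl

lemma dl_add {θ : L} (hθ : θ ^ 3 = (elkK : L)) (P Q : EPt) :
    IsSquare (dl θ P * dl θ Q * dl θ (P + Q)) := by
  rcases P with _ | ⟨x₁, y₁, h₁⟩
  · rw [← WeierstrassCurve.Affine.Point.zero_def, zero_add, dl_zero, one_mul]; exact ⟨_, rfl⟩
  rcases Q with _ | ⟨x₂, y₂, h₂⟩
  · rw [← WeierstrassCurve.Affine.Point.zero_def, add_zero, dl_zero, mul_one]; exact ⟨_, rfl⟩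
  by_cases hxy : x₁ = x₂ ∧ y₁ = elkE.toAffine.negY x₂ y₂
  · rw [add_of_Y_eq hxy.1 hxy.2, dl_zero, mul_one, dl_some, dl_some, hxy.1]; exact ⟨_, rfl⟩
  rw [add_some hxy, dl_some, dl_some, dl_some]
  have := addPolynomial_slope h₁.1 h₂.1 hxy
  rw [addPolynomial_eq] at this
  set l := elkE.toAffine.slope x₁ x₂ y₁ y₂
  set x₃ := elkE.toAffine.addX x₁ x₂ l
  have h := congrArg (Polynomial.aeval θ) this
  simp only [Cubic.toPoly, elkE] at h
  simp at h
  refine ⟨(l : L) * (θ - x₁) + y₁, ?_⟩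
  linear_combination -h - hθ
end chars

section padic
variable {p : ℕ} [hp : Fact p.Prime]

lemma unit_norm (x : ℚ_[p]) (hx : x ≠ 0) : ‖x * (p : ℚ_[p]) ^ (-x.valuation)‖ = 1 := by
  have hp0 : (p : ℝ) ≠ 0 := by exact_mod_cast hp.1.ne_zero
  rw [norm_mul, Padic.norm_eq_zpow_neg_valuation hx, norm_zpow, Padic.norm_p, inv_zpow, ← zpow_neg,
    ← zpow_add₀ hp0]
  simp

/-- The unit part. -/
noncomputable def up (x : ℚ_[p]) (h : x ≠ 0) : ℤ_[p] :=
  ⟨x * (p : ℚ_[p]) ^ (-x.valuation), (unit_norm x h).le⟩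

lemma up_coe (x : ℚ_[p]) (h : x ≠ 0) :
    ((up x h : ℤ_[p]) : ℚ_[p]) = x * (p : ℚ_[p]) ^ (-x.valuation) := rfl

open Classical in
/-- Reduction of the unit part. -/
noncomputable def rd (x : ℚ_[p]) : ZMod p :=
  if h : x ≠ 0 then PadicInt.toZMod (up x h) else 0

lemma rd_mul {x y : ℚ_[p]} (hx : x ≠ 0) (hy : y ≠ 0) : rd (x * y) = rd x * rd y := by
  have hxy := mul_ne_zero hx hy
  have hp0 : (p : ℚ_[p]) ≠ 0 := by exact_mod_cast hp.1.ne_zero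
  rw [rd, rd, rd, dif_pos hx, dif_pos hy, dif_pos hxy, ← map_mul]
  congr 1
  apply Subtype.ext
  simp only [PadicInt.coe_mul, up_coe]
  rw [Padic.valuation_mul hx hy, neg_add, zpow_add₀ hp0]
  ring

lemma rd_unit (z : ℤ_[p]) (hz : PadicInt.toZMod z ≠ 0) : rd (z : ℚ_[p]) = PadicInt.toZMod z := by
  have hz0 : z ≠ 0 := by rintro rfl; simp at hz
  have h1 : ‖z‖ = 1 := by
    by_contra h
    apply hz
    have : z ∈ RingHom.ker (PadicInt.toZMod (p := p)) := by
      rw [PadicInt.ker_toZMod, IsLocalRing.mem_maximalIdeal, PadicInt.mem_nonunits]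
      exact lt_of_le_of_ne (PadicInt.norm_le_one z) h
    exact this
  have hz0' : (z : ℚ_[p]) ≠ 0 := by
    intro h; exact hz0 (Subtype.ext h)
  have hv : (z : ℚ_[p]).valuation = 0 := by
    have := Padic.norm_eq_zpow_neg_valuation hz0'
    rw [PadicInt.padic_norm_e_of_padicInt, h1] at this
    have hp1 : (1:ℝ) < p := by exact_mod_cast hp.1.one_lt
    have := (zpow_eq_one_iff_right₀ (by positivity) hp1.ne').1 this.symm
    omega
  rw [rd, dif_pos hz0']
  congr 1
  apply Subtype.ext
  simp [up_coe, hv]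

lemma rd_ne {x : ℚ_[p]} (hx : x ≠ 0) : rd x ≠ 0 := by
  intro h
  have h1 : rd (x * x⁻¹) = 0 := by rw [rd_mul hx (inv_ne_zero hx), h, zero_mul]
  rw [mul_inv_cancel₀ hx] at h1
  have := rd_unit (p := p) 1 (by simp)
  simp [h1] at this

/-- Quadratic character of the unit part. -/
noncomputable def qc (x : ℚ_[p]) : ℤ := quadraticChar (ZMod p) (rd x)

lemma qc_mul {x y : ℚ_[p]} (hx : x ≠ 0) (hy : y ≠ 0) : qc (x * y) = qc x * qc y := by
  rw [qc, rd_mul hx hy, map_mul]; rfl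

lemma qc_pm {x : ℚ_[p]} (hx : x ≠ 0) : qc x = 1 ∨ qc x = -1 := quadraticChar_dichotomy (rd_ne hx)

lemma qc_sq {x : ℚ_[p]} (hx : x ≠ 0) (h : IsSquare x) : qc x = 1 := by
  obtain ⟨z, rfl⟩ := h
  have hz : z ≠ 0 := by rintro rfl; simp at hx
  rw [qc_mul hz hz]
  rcases qc_pm hz with h | h <;> rw [h] <;> rfl

lemma exists_hom {θ : ℚ_[p]} (hθ : θ ^ 3 = (elkK : ℚ_[p])) :
    ∃ φ : EPt →+ ZMod 2, ∀ P, φ P = if qc (dl θ P) = 1 then 0 else 1 := by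
  refine ⟨AddMonoidHom.mk' (fun P => if qc (dl θ P) = 1 then 0 else 1) ?_, fun P => rfl⟩
  intro P Q
  have hP := dl_ne hθ P
  have hQ := dl_ne hθ Q
  have hR := dl_ne hθ (P + Q)
  have h := qc_sq (mul_ne_zero (mul_ne_zero hP hQ) hR) (dl_add hθ P Q)
  rw [qc_mul (mul_ne_zero hP hQ) hR, qc_mul hP hQ] at h
  rcases qc_pm hP with h1 | h1 <;> rcases qc_pm hQ with h2 | h2 <;>
    rcases qc_pm hR with h3 | h3 <;> simp [h1, h2, h3] at h ⊢ <;> decide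

lemma exists_root (θ₀ : ℤ) (h1 : (p : ℤ) ∣ θ₀ ^ 3 - elkK) (h2 : ¬ (p : ℤ) ∣ 3 * θ₀ ^ 2) :
    ∃ θ : ℤ_[p], θ ^ 3 = (elkK : ℤ_[p]) ∧ PadicInt.toZMod θ = (θ₀ : ZMod p) := by
  have e1 : ‖((3 * θ₀ ^ 2 : ℤ) : ℤ_[p])‖ = 1 := by
    apply le_antisymm (PadicInt.norm_le_one _)
    by_contra h
    exact h2 (PadicInt.norm_int_lt_one_iff_dvd _ |>.1 (not_le.1 h))
  have e2 : ‖((θ₀ ^ 3 - elkK : ℤ) : ℤ_[p])‖ < 1 := (PadicInt.norm_int_lt_one_iff_dvd _).2 h1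
  have := hensels_lemma (p := p) (R := ℤ_[p]) (F := Polynomial.X ^ 3 - Polynomial.C (elkK : ℤ_[p])) (a := (θ₀ : ℤ_[p]))
    (by
      simp only [map_sub, map_pow, Polynomial.aeval_X, Polynomial.aeval_C, Polynomial.derivative_sub,
        Polynomial.derivative_X_pow, Polynomial.derivative_C]
      push_cast at e1 e2
      simp [e1]
      simpa using e2)
  obtain ⟨z, hz, hz2, -⟩ := this
  refine ⟨z, ?_, ?_⟩
  · simpa [sub_eq_zero] using hz
  · have hd : ‖z - θ₀‖ < 1 := by
      refine hz2.trans_le ?_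
      exact PadicInt.norm_le_one _
    have : z - θ₀ ∈ RingHom.ker (PadicInt.toZMod (p := p)) := by
      rw [PadicInt.ker_toZMod, IsLocalRing.mem_maximalIdeal, PadicInt.mem_nonunits]
      exact hd
    rw [RingHom.mem_ker, map_sub, sub_eq_zero] at this
    rw [this]; simp

lemma qc_val (θ : ℤ_[p]) (θ₀ a d : ℤ) (h : PadicInt.toZMod θ = (θ₀ : ZMod p)) (hd : ¬ (p : ℤ) ∣ d)
    (had : ¬ (p : ℤ) ∣ a - θ₀ * d ^ 2) :
    qc (((a / d ^ 2 : ℚ) : ℚ_[p]) - (θ : ℚ_[p])) = legendreSym p (a - θ₀ * d ^ 2) := by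
  have hd0 : d ≠ 0 := by rintro rfl; simp at hd
  have hd0' : (d : ℚ_[p]) ≠ 0 := by exact_mod_cast hd0
  have hz : PadicInt.toZMod ((a : ℤ_[p]) - θ * (d : ℤ_[p]) ^ 2) = ((a - θ₀ * d ^ 2 : ℤ) : ZMod p) := by
    simp [h]
  have hz0 : PadicInt.toZMod ((a : ℤ_[p]) - θ * (d : ℤ_[p]) ^ 2) ≠ 0 := by
    rw [hz]; rwa [Ne, ZMod.intCast_zmod_eq_zero_iff_dvd]
  have hr := rd_unit _ hz0
  have hne : (((a : ℤ_[p]) - θ * (d : ℤ_[p]) ^ 2 : ℤ_[p]) : ℚ_[p]) ≠ 0 := by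
    intro h0
    have : ((a : ℤ_[p]) - θ * (d : ℤ_[p]) ^ 2) = 0 := Subtype.ext h0
    rw [this] at hz0; simp at hz0
  have e : (((a / d ^ 2 : ℚ) : ℚ_[p]) - (θ : ℚ_[p])) * (d * d) = (((a : ℤ_[p]) - θ * (d : ℤ_[p]) ^ 2 : ℤ_[p]) : ℚ_[p]) := by
    push_cast
    field_simp
  have hne2 : (((a / d ^ 2 : ℚ) : ℚ_[p]) - (θ : ℚ_[p])) ≠ 0 := by
    intro h0; rw [h0, zero_mul] at e; exact hne e.symm
  have e2 := congrArg qc e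
  rw [qc_mul hne2 (mul_ne_zero hd0' hd0'), qc_sq (mul_ne_zero hd0' hd0') ⟨_, rfl⟩, mul_one] at e2
  rw [e2, qc, hr, hz]; rfl
end padic
open WeierstrassCurve.Affine WeierstrassCurve.Affine.Point
set_option maxRecDepth 4000

/-- Seventeen points, as triples. -/
def ptL : Fin 17 → ℤ × ℤ × ℤ :=
  ![(111571430819, 1, 21910293993306164),
    (128158333619, 1, 34585304799609464),
    (131572092067, 1, 36998271462366420),
    (152896213667, 1, 51628408881256940),
    (197517823667, 1, 82444038776831560),
    (213542535667, 1, 93961840187993760),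
    (438297744883, 1, 288600674785276032),
    (451261814159, 1, 301637038193593646),
    (742661409641, 2, 592831055149599317),
    (1320696423793, 2, 1498481571547803945),
    (1910940425881, 2, 2630590261571274147),
    (2385229536103, 3, 3592745221134047410),
    (2396206618849, 4, 3167981393256701649),
    (2966685038059, 5, 3451150028920701252),
    (5920908943639, 5, 13905763437182740338),
    (16451533155691, 13, 8127010121846240448),
    (39381797358793, 2, 247140028806225423195)]

/-- Seventeen primes with cube roots of the constant. -/
def prL : Fin 17 → ℕ × ℤ :=
  ![(11, 3), (29, 13), (41, 26), (47, 28), (53, 28), (59, 44), (83, 66), (89, 34), (101, 2), (107, 57), (113, 108), (131, 96), (137, 132), (149, 49), (167, 129), (173, 169), (179, 83)]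

/-- Rows of the inverse matrix, as bit masks. -/
def ivL : Fin 17 → ℕ :=
  ![94475, 128518, 106278, 38791, 106178, 22454, 117346, 99646, 90195, 130283, 51022, 74998, 92213, 65434, 94360, 105311, 18756]

lemma descent_indep {A : Type*} [AddCommGroup A] (h2 : ∀ P : A, (2 : ℤ) • P = 0 → P = 0)
    {ι : Type*} [Fintype ι] (P : ι → A)
    (hev : ∀ n : ι → ℤ, ∑ i, n i • P i = 0 → ∀ i, 2 ∣ n i) (n : ι → ℤ)
    (hn : ∑ i, n i • P i = 0) (i : ι) : n i = 0 := by
  have key : ∀ k : ℕ, ∀ n : ι → ℤ, ∑ i, n i • P i = 0 → ∀ i, (2 : ℤ) ^ k ∣ n i := by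
    intro k
    induction k with
    | zero => intro n _ i; simp
    | succ k ih =>
      intro n hn i
      choose m hm using hev n hn
      have h0 : ∑ i, m i • P i = 0 := by
        apply h2
        rw [Finset.smul_sum, ← hn]
        refine Finset.sum_congr rfl fun i _ => ?_
        rw [hm i, mul_smul]
      rw [hm i, pow_succ']
      exact mul_dvd_mul_left 2 (ih m h0 i)
  apply Int.eq_zero_of_abs_lt_dvd (key (n i).natAbs n hn i)
  have := @Nat.lt_two_pow_self (n i).natAbs
  rw [Int.abs_eq_natAbs]
  exact_mod_cast this

lemma ptL_eq : ∀ i, (ptL i).2.2 ^ 2 = (ptL i).1 ^ 3 - elkK * (ptL i).2.1 ^ 6 := by decide +kernel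

lemma ptL_d : ∀ i, (ptL i).2.1 ≠ 0 := by decide +kernel

lemma ptL_ns (i : Fin 17) : elkE.toAffine.Nonsingular
    ((ptL i).1 / (ptL i).2.1 ^ 2 : ℚ) ((ptL i).2.2 / (ptL i).2.1 ^ 3 : ℚ) := by
  rw [← WeierstrassCurve.Affine.equation_iff_nonsingular, elkE_eq]
  have h : ((ptL i).2.2 : ℚ) ^ 2 = (ptL i).1 ^ 3 - elkK * (ptL i).2.1 ^ 6 := by
    exact_mod_cast ptL_eq i
  have hd : ((ptL i).2.1 : ℚ) ≠ 0 := by exact_mod_cast ptL_d i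
  field_simp
  linear_combination h

/-- The seventeen points on the curve. -/
noncomputable def ptE (i : Fin 17) : EPt := .some _ _ (ptL_ns i)

/-- Computable Legendre exponent. -/
def lgE (p : ℕ) (a : ℤ) : ZMod 2 := if (a % p).toNat ^ (p / 2) % p = 1 then 0 else 1

lemma lgE_eq (p : ℕ) [hp : Fact p.Prime] (a : ℤ) (ha : ¬ (p : ℤ) ∣ a) (hp2 : p ≠ 2) :
    (if legendreSym p a = 1 then (0 : ZMod 2) else 1) = lgE p a := by
  have ha' : (a : ZMod p) ≠ 0 := by rwa [Ne, ZMod.intCast_zmod_eq_zero_iff_dvd]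
  have hp0 : (p : ℤ) ≠ 0 := by exact_mod_cast hp.1.ne_zero
  have h := legendreSym.eq_pow p a
  have e : ((((a % p).toNat ^ (p / 2) % p : ℕ)) : ZMod p) = (a : ZMod p) ^ (p / 2) := by
    rw [ZMod.natCast_mod, Nat.cast_pow]
    congr 1
    have : (((a % p).toNat : ℤ) : ZMod p) = (a : ZMod p) := by
      rw [Int.toNat_of_nonneg (Int.emod_nonneg _ hp0)]
      simp
    exact_mod_cast this
  rw [lgE]
  congr 1
  rw [eq_iff_iff]
  have h1 : (1 : ℕ) % p = 1 := Nat.mod_eq_of_lt hp.1.one_lt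
  have e2 : ((a % p).toNat ^ (p / 2) % p = 1) ↔ (a : ZMod p) ^ (p / 2) = 1 := by
    rw [← e]
    constructor
    · intro h; rw [h]; simp
    · intro h
      have : (((a % p).toNat ^ (p / 2) % p : ℕ) : ZMod p) = ((1 : ℕ) : ZMod p) := by
        rw [h]; simp
      rw [ZMod.natCast_eq_natCast_iff'] at this
      rwa [Nat.mod_mod, h1] at this
  rw [e2, ← h]
  have : Fact (2 < p) := ⟨lt_of_le_of_ne hp.1.two_le hp2.symm⟩
  rcases legendreSym.eq_one_or_neg_one p ha' with h | h <;> rw [h]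
  · simp
  · simp [ZMod.neg_one_ne_one]

lemma exists_char (p : ℕ) (θ₀ : ℤ) (hp : p.Prime) (hp2 : p ≠ 2) (h1 : (p : ℤ) ∣ θ₀ ^ 3 - elkK)
    (h2 : ¬ (p : ℤ) ∣ 3 * θ₀ ^ 2) (h3 : ∀ i, ¬ (p : ℤ) ∣ (ptL i).2.1)
    (h4 : ∀ i, ¬ (p : ℤ) ∣ (ptL i).1 - θ₀ * (ptL i).2.1 ^ 2) :
    ∃ φ : EPt →+ ZMod 2, ∀ i, φ (ptE i) = lgE p ((ptL i).1 - θ₀ * (ptL i).2.1 ^ 2) := by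
  have : Fact p.Prime := ⟨hp⟩
  obtain ⟨θ, hθ, hr⟩ := exists_root θ₀ h1 h2
  have hθ' : (θ : ℚ_[p]) ^ 3 = (elkK : ℚ_[p]) := by
    have := congrArg (fun z : ℤ_[p] => (z : ℚ_[p])) hθ
    simpa using this
  obtain ⟨φ, hφ⟩ := exists_hom hθ'
  refine ⟨φ, fun i => ?_⟩
  rw [hφ, ptE, dl_some, qc_val θ θ₀ _ _ hr (h3 i) (h4 i), lgE_eq _ _ (h4 i) hp2]

/-- The matrix of characters. -/
def mtx (j i : Fin 17) : ZMod 2 :=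
  lgE (prL j).1 ((ptL i).1 - (prL j).2 * (ptL i).2.1 ^ 2)

/-- Its inverse. -/
def imtx (k j : Fin 17) : ZMod 2 := if (ivL k).testBit j then 1 else 0

lemma imtx_mul : ∀ k i, ∑ j, imtx k j * mtx j i = if k = i then 1 else 0 := by decide +kernel

lemma prL_prime (j : Fin 17) : (prL j).1.Prime := by
  fin_cases j <;> simp [prL] <;> norm_num

lemma prL_h1 : ∀ j, (((prL j).1 : ℕ) : ℤ) ∣ (prL j).2 ^ 3 - elkK := by decide +kernel
lemma prL_h2 : ∀ j, ¬ (((prL j).1 : ℕ) : ℤ) ∣ 3 * (prL j).2 ^ 2 := by decide +kernel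
lemma prL_h3 : ∀ j i, ¬ (((prL j).1 : ℕ) : ℤ) ∣ (ptL i).2.1 := by decide +kernel
lemma prL_h4 : ∀ j i, ¬ (((prL j).1 : ℕ) : ℤ) ∣ (ptL i).1 - (prL j).2 * (ptL i).2.1 ^ 2 := by
  decide +kernel
lemma prL_h5 : ∀ j, (prL j).1 ≠ 2 := by decide +kernel

lemma ptE_indep (n : Fin 17 → ℤ) (hn : ∑ i, n i • ptE i = 0) (i : Fin 17) : n i = 0 := by
  refine descent_indep elkE_two_torsion ptE ?_ n hn i
  intro n hn k
  have hφ : ∀ j, ∃ φ : EPt →+ ZMod 2, ∀ i, φ (ptE i) = mtx j i := fun j =>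
    exists_char _ _ (prL_prime j) (prL_h5 j) (prL_h1 j) (prL_h2 j) (prL_h3 j) (prL_h4 j)
  choose φ hφ using hφ
  have h : ∀ j, ∑ i, (n i : ZMod 2) * mtx j i = 0 := by
    intro j
    have := congrArg (φ j) hn
    rw [_root_.map_sum, _root_.map_zero] at this
    rw [← this]
    refine Finset.sum_congr rfl fun i _ => ?_
    rw [map_zsmul, hφ, zsmul_eq_mul]
  have h2 : ∑ j, imtx k j * ∑ i, (n i : ZMod 2) * mtx j i = (n k : ZMod 2) := by
    simp_rw [Finset.mul_sum]
    rw [Finset.sum_comm]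
    have : ∀ i, ∑ j, imtx k j * ((n i : ZMod 2) * mtx j i) = (n i : ZMod 2) * if k = i then 1 else 0 := by
      intro i
      rw [← imtx_mul k i, Finset.mul_sum]
      exact Finset.sum_congr rfl fun j _ => by ring
    simp_rw [this]
    simp
  simp_rw [h] at h2
  refine (ZMod.intCast_zmod_eq_zero_iff_dvd (n k) 2).1 ?_
  simpa using h2.symm
open WeierstrassCurve.Affine WeierstrassCurve.Affine.Point

/-- Denominator clearing factor. -/
def dP : EPt → ℕ
  | .zero => 1
  | .some x _ _ => x.num.natAbs * x.den

/-- First coordinate. -/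
def uE : EPt → ℚ
  | .zero => 0
  | .some x y _ => y / x

/-- Second coordinate. -/
def vE : EPt → ℚ
  | .zero => 0
  | .some x _ _ => 1 / x

lemma dP_pos (P : EPt) : 0 < dP P := by
  rcases P with _ | ⟨x, y, h⟩
  · exact Nat.one_pos
  · have := elkE_x_ne h
    have h1 : 0 < x.num.natAbs := by simpa [Int.natAbs_pos] using this
    exact Nat.mul_pos h1 x.den_pos

lemma dP_log (P : EPt) : Real.log (dP P) ≤ 2 * ht P := by
  rcases P with _ | ⟨x, y, h⟩
  · have := ht_nonneg (Point.zero : EPt)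
    have e : dP (Point.zero : EPt) = 1 := rfl
    rw [e]; simpa using this
  · have e : dP (Point.some x y h : EPt) = x.num.natAbs * x.den := rfl
    have hpos := dP_pos (Point.some x y h : EPt)
    rw [e] at hpos
    rw [e, ht, xRep_some, ← Height.logHeight₁_eq_logHeight, Rat.logHeight₁_eq_log_max]
    have : (2 : ℝ) * Real.log ((max x.num.natAbs x.den : ℕ) : ℝ)
        = Real.log (((max x.num.natAbs x.den) ^ 2 : ℕ) : ℝ) := by
      push_cast; rw [Real.log_pow]; norm_num
    rw [this]
    apply Real.log_le_log
    · exact_mod_cast hpos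
    · have : x.num.natAbs * x.den ≤ (max x.num.natAbs x.den) ^ 2 := by
        rw [sq]; gcongr
        · exact le_max_left _ _
        · exact le_max_right _ _
      exact_mod_cast this

lemma int_of_sq {q : ℚ} {z : ℤ} (h : q ^ 2 = z) : ∃ w : ℤ, q = w := by
  have hd : q.den ^ 2 = 1 := by rw [← Rat.den_pow, h]; simp
  have hd1 : q.den = 1 := by simpa using hd
  rw [Rat.den_eq_one_iff] at hd1
  exact ⟨q.num, hd1.symm⟩

lemma uv_int (P : EPt) : (∃ U : ℤ, dP P * uE P = U) ∧ ∃ V : ℤ, dP P * vE P = V := by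
  rcases P with _ | ⟨x, y, h⟩
  · constructor
    · exact ⟨0, by simp [uE]⟩
    · exact ⟨0, by simp [vE]⟩
  have hx := elkE_x_ne h
  have hE := elkE_eq.1 h.1
  have e : (dP (Point.some x y h : EPt) : ℚ) = |(x.num : ℚ)| * x.den := by
    change ((x.num.natAbs * x.den : ℕ) : ℚ) = _
    rw [Nat.cast_mul, Nat.cast_natAbs, Int.cast_abs]
  have eu : uE (Point.some x y h : EPt) = y / x := rfl
  have ev : vE (Point.some x y h : EPt) = 1 / x := rfl
  have hden : (x.den : ℚ) ≠ 0 := by exact_mod_cast x.den_pos.ne'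
  have hxe : (x.num : ℚ) = x * x.den := (Rat.mul_den_eq_num x).symm
  rw [e, eu, ev]
  have hn2 : |(x.num : ℚ)| ^ 2 = (x * x.den) ^ 2 := by rw [sq_abs, hxe]
  constructor
  · apply int_of_sq (z := x.num ^ 3 * x.den - elkK * x.den ^ 4)
    push_cast
    rw [mul_pow, mul_pow, hn2, hxe, div_pow, hE]
    field_simp
  · apply int_of_sq (z := x.den ^ 4)
    push_cast
    rw [mul_pow, mul_pow, hn2]
    field_simp

lemma uv_eq {P : EPt} (hP : P ≠ 0) : uE P ^ 2 * vE P + elkK * vE P ^ 3 = 1 := by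
  rcases P with _ | ⟨x, y, h⟩
  · exact absurd rfl hP
  have hx := elkE_x_ne h
  have hE := elkE_eq.1 h.1
  change (y / x) ^ 2 * (1 / x) + elkK * (1 / x) ^ 3 = 1
  field_simp
  linear_combination hE

lemma uv_inj {P Q : EPt} (hP : P ≠ 0) (hQ : Q ≠ 0) (hu : uE P = uE Q) (hv : vE P = vE Q) :
    P = Q := by
  rcases P with _ | ⟨x, y, h⟩
  · exact absurd rfl hP
  rcases Q with _ | ⟨x', y', h'⟩
  · exact absurd rfl hQ
  have hx := elkE_x_ne h
  have hx' := elkE_x_ne h'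
  change y / x = y' / x' at hu
  change 1 / x = 1 / x' at hv
  have e1 : x = x' := by simpa using hv
  subst e1
  have e2 : y = y' := by
    field_simp at hu; exact hu
  subst e2
  rfl

/-- Integer combinations of the points. -/
noncomputable def cmb {N : ℕ} (n : Fin 17 → Fin N) : EPt := ∑ i, (n i : ℕ) • ptE i

lemma cmb_inj {N : ℕ} : Function.Injective (cmb (N := N)) := by
  intro n n' h
  have h0 : ∑ i, ((n i : ℤ) - (n' i : ℤ)) • ptE i = 0 := by
    simp_rw [sub_smul, Finset.sum_sub_distrib, natCast_zsmul]
    exact sub_eq_zero.2 h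
  funext i
  have := ptE_indep _ h0 i
  apply Fin.ext
  omega

lemma cubic_fin (A : ℤ) (hA : 0 < A) (m : ℕ) (hm : 0 < m) :
    {xy : ℤ × ℤ | xy.1 ^ 2 * xy.2 + A * xy.2 ^ 3 = m}.Finite := by
  apply ((Set.finite_Icc (-(m : ℤ)) m).prod (Set.finite_Icc (-(m : ℤ)) m)).subset
  rintro ⟨x, y⟩ h
  simp only [Set.mem_setOf_eq] at h
  have hm' : (0 : ℤ) < m := by exact_mod_cast hm
  have h2 : y * (x ^ 2 + A * y ^ 2) = m := by linear_combination h
  have hnn : 0 ≤ x ^ 2 + A * y ^ 2 := by positivity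
  have hy : 0 < y := by
    by_contra hy
    have : y * (x ^ 2 + A * y ^ 2) ≤ 0 := mul_nonpos_of_nonpos_of_nonneg (not_lt.1 hy) hnn
    omega
  have hy2 : y ^ 2 ≤ A * y ^ 2 := by nlinarith [sq_nonneg y]
  have hyy : y ≤ y ^ 2 := by nlinarith
  have hs : x ^ 2 + y ^ 2 ≤ m := by nlinarith
  have hx1 : x ≤ x ^ 2 := by
    rcases le_or_gt x 0 with h | h
    · nlinarith
    · nlinarith
  have hx2 : -x ≤ x ^ 2 := by
    rcases le_or_gt 0 x with h | h
    · nlinarith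
    · nlinarith
  simp only [Set.mem_prod, Set.mem_Icc]
  refine ⟨⟨?_, ?_⟩, ?_, ?_⟩ <;> nlinarith [sq_nonneg x, sq_nonneg y]

/-- Common denominator. -/
noncomputable def bigD (N : ℕ) : ℕ := 2 ^ (N ^ 19) * ∏ n : Fin 17 → Fin N, dP (cmb n)

lemma bigD_pos (N : ℕ) : 0 < bigD N :=
  Nat.mul_pos (by positivity) (Finset.prod_pos fun _ _ => dP_pos _)

lemma bigD_ge (N : ℕ) : N < bigD N := by
  have h1 : N < 2 ^ (N ^ 19) := lt_of_le_of_lt (Nat.le_self_pow (by norm_num) N) Nat.lt_two_pow_self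
  have h2 : 1 ≤ ∏ n : Fin 17 → Fin N, dP (cmb n) := Finset.prod_pos fun _ _ => dP_pos _
  exact lt_of_lt_of_le h1 (Nat.le_mul_of_pos_right _ h2)

lemma bigD_log : ∃ C : ℝ, 0 < C ∧ ∀ N : ℕ, 1 ≤ N → Real.log (bigD N) ≤ C * N ^ 19 := by
  obtain ⟨C, hC0, hC⟩ := ht_sum Finset.univ ptE
  refine ⟨1 + 2 * C, by positivity, fun N hN => ?_⟩
  have hb : ∀ n : Fin 17 → Fin N, Real.log (dP (cmb n)) ≤ 2 * (C * N ^ 2) := by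
    intro n
    refine (dP_log _).trans ?_
    have := hC (fun i => (n i : ℕ)) N hN (fun i => (n i).2.le)
    have e : cmb n = ∑ i, (n i : ℕ) • ptE i := rfl
    rw [e]; linarith
  rw [bigD, Nat.cast_mul, Real.log_mul (by positivity)
    (by exact_mod_cast (Finset.prod_pos fun _ _ => dP_pos _).ne'), Nat.cast_prod,
    Real.log_prod (fun n _ => by exact_mod_cast (dP_pos _).ne')]
  have h1 : ∑ n : Fin 17 → Fin N, Real.log (dP (cmb n)) ≤ N ^ 17 * (2 * (C * N ^ 2)) := by
    refine (Finset.sum_le_card_nsmul _ _ _ fun n _ => hb n).trans ?_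
    simp
  have h2 : Real.log ((2 ^ (N ^ 19) : ℕ) : ℝ) ≤ N ^ 19 := by
    push_cast
    rw [Real.log_pow]
    push_cast
    have : Real.log 2 ≤ 1 := by linarith [Real.log_two_lt_d9]
    have hN : (0 : ℝ) ≤ (N : ℝ) ^ 19 := by positivity
    nlinarith
  calc _ ≤ (N : ℝ) ^ 19 + N ^ 17 * (2 * (C * N ^ 2)) := add_le_add h2 h1
    _ = _ := by ring

lemma count (t : ℕ) (ht : 0 < t) (N : ℕ) (hN : 2 ≤ N) :
    N ^ 17 - 1 ≤ Set.ncard {xy : ℤ × ℤ | xy.1 ^ 2 * xy.2 + elkK * t ^ 2 * xy.2 ^ 3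
      = ((t ^ 2 * bigD N ^ 3 : ℕ) : ℤ)} := by
  have hD := bigD_pos N
  have hDq : (bigD N : ℚ) ≠ 0 := by exact_mod_cast hD.ne'
  have htq : (t : ℚ) ≠ 0 := by exact_mod_cast ht.ne'
  have : NeZero N := ⟨by omega⟩
  have hz : ∀ n : Fin 17 → Fin N, cmb n = 0 → n = 0 := by
    intro n hn
    apply cmb_inj
    rw [hn]; simp [cmb]
  have hex : ∀ n : Fin 17 → Fin N, ∃ xy : ℤ × ℤ, (xy.1 : ℚ) = t * (bigD N * uE (cmb n)) ∧
      (xy.2 : ℚ) = bigD N * vE (cmb n) := by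
    intro n
    obtain ⟨⟨U, hU⟩, V, hV⟩ := uv_int (cmb n)
    have hdvd : dP (cmb n) ∣ bigD N :=
      Dvd.dvd.mul_left (Finset.dvd_prod_of_mem (fun n => dP (cmb n)) (Finset.mem_univ n)) _
    obtain ⟨k, hk⟩ := hdvd
    refine ⟨(t * (k * U), k * V), ?_, ?_⟩
    · push_cast; rw [hk, ← hU]; push_cast; ring
    · push_cast; rw [hk, ← hV]; push_cast; ring
  choose f hf1 hf2 using hex
  have hinj : Set.InjOn f {n | n ≠ 0} := by
    intro n hn n' hn' h
    apply cmb_inj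
    have a1 : (t : ℚ) * (bigD N * uE (cmb n)) = t * (bigD N * uE (cmb n')) := by
      rw [← hf1, ← hf1, h]
    have a2 : (bigD N * vE (cmb n)) = bigD N * vE (cmb n') := by
      rw [← hf2, ← hf2, h]
    exact uv_inj (fun h => hn (hz _ h)) (fun h => hn' (hz _ h))
      (mul_left_cancel₀ hDq (mul_left_cancel₀ htq a1)) (mul_left_cancel₀ hDq a2)
  have hcard : Set.ncard (f '' {n : Fin 17 → Fin N | n ≠ 0}) = N ^ 17 - 1 := by
    rw [Set.ncard_image_of_injOn hinj]
    have : {n : Fin 17 → Fin N | n ≠ 0} = ({0} : Set _)ᶜ := by ext; simp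
    rw [this, Set.ncard_compl, Set.ncard_singleton]
    simp
  rw [← hcard]
  apply Set.ncard_le_ncard
  · rintro _ ⟨n, hn, rfl⟩
    have h := uv_eq (fun h => hn (hz n h))
    simp only [Set.mem_setOf_eq]
    have : ((f n).1 : ℚ) ^ 2 * (f n).2 + elkK * t ^ 2 * (f n).2 ^ 3 = t ^ 2 * bigD N ^ 3 := by
      rw [hf1, hf2]
      linear_combination (t : ℚ) ^ 2 * bigD N ^ 3 * h
    exact_mod_cast this
  · apply cubic_fin
    · have := elkK_pos; positivity
    · positivity

lemma asym (t : ℕ) (ht : 0 < t) : ∃ c₀ : ℝ, 0 < c₀ ∧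
    {m : ℕ | 0 < m ∧ c₀ * Real.log m ^ ((17 : ℝ) / 19) <
      ((Set.ncard {xy : ℤ × ℤ | xy.1 ^ 2 * xy.2 + elkK * t ^ 2 * xy.2 ^ 3 = (m : ℤ)} : ℕ) : ℝ)}.Infinite := by
  obtain ⟨C, hC0, hC⟩ := bigD_log
  have hlt : 0 ≤ Real.log t := Real.log_natCast_nonneg t
  set B : ℝ := 2 * Real.log t + 3 * C with hB
  have hBpos : 0 < B := by positivity
  have hBp : 0 < B ^ ((17 : ℝ) / 19) := Real.rpow_pos_of_pos hBpos _
  refine ⟨1 / (4 * B ^ ((17 : ℝ) / 19)), by positivity, ?_⟩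
  apply Set.infinite_of_forall_exists_gt
  intro a
  obtain ⟨N, hN⟩ : ∃ N, N = a + 2 := ⟨_, rfl⟩
  have hD := bigD_pos N
  have hmpos : 0 < t ^ 2 * bigD N ^ 3 := by positivity
  refine ⟨t ^ 2 * bigD N ^ 3, ⟨hmpos, ?_⟩, ?_⟩
  · have hcnt := count t ht N (by omega)
    have hN1 : (1 : ℝ) ≤ N := by exact_mod_cast (by omega : 1 ≤ N)
    have hlog : Real.log ((t ^ 2 * bigD N ^ 3 : ℕ) : ℝ) ≤ B * (N : ℝ) ^ 19 := by
      push_cast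
      rw [Real.log_mul (by positivity) (by positivity), Real.log_pow, Real.log_pow]
      push_cast
      have h1 := hC N (by omega)
      have h2 : (1 : ℝ) ≤ (N : ℝ) ^ 19 := one_le_pow₀ hN1
      rw [hB]
      have h7 := mul_le_mul_of_nonneg_left h2 hlt
      generalize (N : ℝ) ^ 19 = M at *
      linarith
    have hpow : Real.log ((t ^ 2 * bigD N ^ 3 : ℕ) : ℝ) ^ ((17 : ℝ) / 19)
        ≤ B ^ ((17 : ℝ) / 19) * (N : ℝ) ^ 17 := by
      refine (Real.rpow_le_rpow (Real.log_natCast_nonneg _) hlog (by norm_num)).trans ?_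
      rw [Real.mul_rpow hBpos.le (by positivity)]
      apply le_of_eq
      congr 1
      rw [← Real.rpow_natCast, ← Real.rpow_mul (by positivity), ← Real.rpow_natCast]
      norm_num
    have h3 : 1 / (4 * B ^ ((17 : ℝ) / 19)) *
        Real.log ((t ^ 2 * bigD N ^ 3 : ℕ) : ℝ) ^ ((17 : ℝ) / 19) ≤ (N : ℝ) ^ 17 / 4 := by
      refine (mul_le_mul_of_nonneg_left hpow (by positivity)).trans ?_
      apply le_of_eq
      field_simp
    refine lt_of_le_of_lt h3 ?_
    have h4 : (N : ℝ) ^ 17 - 1 ≤ ((N ^ 17 - 1 : ℕ) : ℝ) := by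
      have : 1 ≤ N ^ 17 := Nat.one_le_pow _ _ (by omega)
      push_cast [Nat.cast_sub this]; exact le_rfl
    have h5 : (2 : ℝ) ≤ (N : ℝ) ^ 17 := by
      have : (2 : ℝ) ≤ N := by exact_mod_cast (by omega : 2 ≤ N)
      exact this.trans (le_self_pow₀ hN1 (by norm_num))
    have h6 : ((N ^ 17 - 1 : ℕ) : ℝ) ≤ _ := Nat.cast_le.2 hcnt
    linarith
  · have h1 := bigD_ge N
    have h2 : bigD N ≤ bigD N ^ 3 := Nat.le_self_pow (by norm_num) _
    have h3 : bigD N ^ 3 ≤ t ^ 2 * bigD N ^ 3 := Nat.le_mul_of_pos_left _ (by positivity)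
    omega

lemma disc_equiv {F F' : ℤ × ℤ × ℤ × ℤ} (h : cubicEquiv F F') : cubicDisc F' = cubicDisc F := by
  obtain ⟨a, b, c, d⟩ := F
  obtain ⟨a', b', c', d'⟩ := F'
  obtain ⟨p, q, r, s, hdet, hv⟩ := h
  have h1 := hv 1 0
  have h2 := hv 0 1
  have h3 := hv 1 1
  have h4 := hv 1 (-1)
  simp only [cubicVal] at h1 h2 h3 h4
  have ea : a' = a * p ^ 3 + b * p ^ 2 * r + c * p * r ^ 2 + d * r ^ 3 := by linear_combination h1
  have ed : d' = a * q ^ 3 + b * q ^ 2 * s + c * q * s ^ 2 + d * s ^ 3 := by linear_combination h2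
  have eb : b' = 3 * a * p ^ 2 * q + b * (p ^ 2 * s + 2 * p * q * r) + c * (r ^ 2 * q + 2 * p * r * s)
      + 3 * d * r ^ 2 * s := by
    have : 2 * b' = 2 * (3 * a * p ^ 2 * q + b * (p ^ 2 * s + 2 * p * q * r)
      + c * (r ^ 2 * q + 2 * p * r * s) + 3 * d * r ^ 2 * s) := by
      linear_combination h3 - h4 - 2 * h2
    exact mul_left_cancel₀ two_ne_zero this
  have ec : c' = 3 * a * p * q ^ 2 + b * (q ^ 2 * r + 2 * p * q * s) + c * (s ^ 2 * p + 2 * q * r * s)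
      + 3 * d * r * s ^ 2 := by
    have : 2 * c' = 2 * (3 * a * p * q ^ 2 + b * (q ^ 2 * r + 2 * p * q * s)
      + c * (s ^ 2 * p + 2 * q * r * s) + 3 * d * r * s ^ 2) := by
      linear_combination h3 + h4 - 2 * h1
    exact mul_left_cancel₀ two_ne_zero this
  have h6 : (p * s - q * r) ^ 6 = 1 := by rcases hdet with h | h <;> rw [h] <;> norm_num
  have : cubicDisc (a', b', c', d') = (p * s - q * r) ^ 6 * cubicDisc (a, b, c, d) := by
    simp only [cubicDisc]
    rw [ea, eb, ec, ed]
    ring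
  rw [this, h6, one_mul]

/-- The family of forms. -/
def fam (t : ℕ) : ℤ × ℤ × ℤ × ℤ := (0, 1, 0, elkK * ((t : ℤ) + 1) ^ 2)

lemma fam_disc (t : ℕ) : cubicDisc (fam t) = -4 * elkK * ((t : ℤ) + 1) ^ 2 := by
  simp only [cubicDisc, fam]; ring

lemma fam_disc_inj {t t' : ℕ} (h : cubicDisc (fam t) = cubicDisc (fam t')) : t = t' := by
  rw [fam_disc, fam_disc] at h
  have hk := elkK_pos
  have h2 : ((t : ℤ) + 1) ^ 2 = ((t' : ℤ) + 1) ^ 2 :=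
    mul_left_cancel₀ (by linarith : -4 * elkK ≠ 0) h
  have h3 : (t : ℤ) + 1 = t' + 1 := by
    rwa [sq_eq_sq₀ (by positivity) (by positivity)] at h2
  omega

end

/-- There are infinitely many pairwise `GL₂(ℤ)`-inequivalent binary cubic forms of
content `1` and nonzero discriminant such that, for each such form `F`, there is a
constant `c₀ > 0` with `N_F(m) > c₀·(log m)^{17/19}` for infinitely many positive
integers `m`. -/
theorem stmt_18 :
    ∃ S : Set (ℤ × ℤ × ℤ × ℤ), S.Infinite ∧
      (∀ F ∈ S, ∀ F' ∈ S, F ≠ F' → ¬ cubicEquiv F F') ∧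
      (∀ F ∈ S, cubicContent F = 1 ∧ cubicDisc F ≠ 0 ∧
        ∃ c₀ : ℝ, 0 < c₀ ∧
          {m : ℕ | 0 < m ∧
            c₀ * Real.log m ^ ((17 : ℝ) / 19) < (numReps F m : ℝ)}.Infinite) := by
  refine ⟨Set.range fam, ?_, ?_, ?_⟩
  · apply Set.infinite_range_of_injective
    intro t t' h
    exact fam_disc_inj (by rw [h])
  · rintro _ ⟨t, rfl⟩ _ ⟨t', rfl⟩ hne he
    exact hne (by rw [fam_disc_inj (disc_equiv he)])
  · rintro _ ⟨t, rfl⟩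
    refine ⟨by simp [cubicContent, fam], ?_, ?_⟩
    · rw [fam_disc]
      have hk := elkK_pos
      have : 0 < elkK * ((t : ℤ) + 1) ^ 2 := by positivity
      linarith
    · have h := asym (t + 1) (Nat.succ_pos t)
      have e : ∀ m : ℕ, numReps (fam t) m = Set.ncard {xy : ℤ × ℤ |
          xy.1 ^ 2 * xy.2 + elkK * ((t + 1 : ℕ) : ℤ) ^ 2 * xy.2 ^ 3 = (m : ℤ)} := by
        intro m
        simp only [numReps, cubicVal, fam]
        congr 1
        ext xy
        simp
      simp_rw [e]
      exact h
end
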